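/- Let (ν_J)_{J∈ℤ} be a modular invariant spectrum. Fix δ > 0, γ ∈ [0, 1/4) and h* > 0, and for an integer J ≥ 2 let N(J) := ν_J((h* − δ·J^{−γ}, h* + δ·J^{−γ})). Then lim_{J→∞} √2 · J^{1/2+γ} · e^{−4π√(A·J)} · N(J) exists and equals ∫_{h*−δ}^{h*+δ} ρ_c(h) dh when γ = 0, and equals 2δ·ρ_c(h*) when 0 < γ < 1/4. -/

import Mathlib

open MeasureTheory Filter Topology Real

noncomputable section

/-- A spectrum: a family of positive Borel measures on `ℝ`, each supported in
`{h | Tgap < h ∧ Tgap < h + J}`, with finite total Laplace-type sum. -/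
def IsSpectrum (Tgap : ℝ) (ν : ℤ → Measure ℝ) : Prop :=
  (∀ J : ℤ, ν J {h : ℝ | ¬ (Tgap < h ∧ Tgap < h + (J : ℝ))} = 0) ∧
  (∀ b b' : ℝ, 0 < b → 0 < b' →
    (∑' J : ℤ, ∫⁻ h : ℝ, ENNReal.ofReal (Real.exp (-b * h - b' * (h + (J : ℝ)))) ∂(ν J)) < ⊤)

/-- The reduced (Virasoro primary) partition function. -/
def Ztilde (A : ℝ) (ν : ℤ → Measure ℝ) (βL βR : ℂ) : ℂ :=
  Complex.exp ((A : ℂ) * (βL + βR)) *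
    ((1 - Complex.exp (-βL)) * (1 - Complex.exp (-βR)) +
      ∑' J : ℤ, ∫ h : ℝ, Complex.exp (-βL * (h : ℂ) - βR * ((h : ℂ) + (J : ℂ))) ∂(ν J))

/-- Modular invariance of the reduced partition function (principal square root). -/
def ModularInvariant (A : ℝ) (ν : ℤ → Measure ℝ) : Prop :=
  ∀ βL βR : ℂ, 0 < βL.re → 0 < βR.re →
    Ztilde A ν βL βR =
      ((4 * (π : ℂ) ^ 2) / (βL * βR)) ^ ((1 : ℂ) / 2) *
        Ztilde A ν (4 * (π : ℂ) ^ 2 / βL) (4 * (π : ℂ) ^ 2 / βR)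

/-- The crossed-channel density `ρ_c(h)`; for `0 < A < 1` the second `cosh` is a `cos`. -/
def rhoc (A : ℝ) (h : ℝ) : ℝ :=
  if h ≤ A then 0
  else Real.sqrt (2 / (h - A)) *
    (Real.cosh (4 * π * Real.sqrt (A * (h - A))) -
      (if 1 ≤ A then Real.cosh (4 * π * Real.sqrt ((A - 1) * (h - A)))
       else Real.cos (4 * π * Real.sqrt ((1 - A) * (h - A)))))



/-! ### Part 1: basic estimates on the partition function -/

def Ir (ν : ℤ → Measure ℝ) (b b' : ℝ) (J : ℤ) : ℝ :=
  ∫ h : ℝ, Real.exp (-b * h - b' * (h + (J : ℝ))) ∂(ν J)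

def Fr (ν : ℤ → Measure ℝ) (b b' : ℝ) : ℝ := ∑' J : ℤ, Ir ν b b' J

def Ic (ν : ℤ → Measure ℝ) (βL βR : ℂ) (J : ℤ) : ℂ :=
  ∫ h : ℝ, Complex.exp (-βL * (h : ℂ) - βR * ((h : ℂ) + (J : ℂ))) ∂(ν J)

def Sc (ν : ℤ → Measure ℝ) (βL βR : ℂ) : ℂ := ∑' J : ℤ, Ic ν βL βR J

lemma spec_integrable {T : ℝ} {ν : ℤ → Measure ℝ} (hs : IsSpectrum T ν) {b b' : ℝ}
    (hb : 0 < b) (hb' : 0 < b') (J : ℤ) :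
    Integrable (fun h : ℝ => Real.exp (-b * h - b' * (h + (J : ℝ)))) (ν J) := by
  refine ⟨by fun_prop, ?_⟩
  rw [hasFiniteIntegral_iff_ofReal (Eventually.of_forall fun _ => (Real.exp_pos _).le)]
  exact lt_of_le_of_lt (ENNReal.le_tsum J) (hs.2 b b' hb hb')

lemma Ir_nonneg (ν : ℤ → Measure ℝ) (b b' : ℝ) (J : ℤ) : 0 ≤ Ir ν b b' J :=
  integral_nonneg fun _ => (Real.exp_pos _).le

lemma Fr_nonneg (ν : ℤ → Measure ℝ) (b b' : ℝ) : 0 ≤ Fr ν b b' :=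
  tsum_nonneg fun _ => Ir_nonneg _ _ _ _

lemma spec_summable {T : ℝ} {ν : ℤ → Measure ℝ} (hs : IsSpectrum T ν) {b b' : ℝ}
    (hb : 0 < b) (hb' : 0 < b') : Summable (Ir ν b b') := by
  have h := ENNReal.summable_toReal (hs.2 b b' hb hb').ne
  refine h.congr fun J => ?_
  rw [Ir, integral_eq_lintegral_of_nonneg_ae (Eventually.of_forall fun _ => (Real.exp_pos _).le)
    (by fun_prop)]

lemma spec_ae {T : ℝ} {ν : ℤ → Measure ℝ} (hs : IsSpectrum T ν) (J : ℤ) :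
    ∀ᵐ h ∂(ν J), T < h ∧ T < h + (J : ℝ) := by
  rw [ae_iff]; exact hs.1 J

lemma Fr_shift {T : ℝ} {ν : ℤ → Measure ℝ} (hs : IsSpectrum T ν) {b b' s t : ℝ}
    (hb : 0 < b) (hb' : 0 < b') (hs0 : 0 ≤ s) (ht0 : 0 ≤ t) :
    Fr ν (b + s) (b' + t) ≤ Real.exp (-(s + t) * T) * Fr ν b b' := by
  unfold Fr
  rw [← tsum_mul_left]
  refine Summable.tsum_le_tsum (fun J => ?_) (spec_summable hs (by linarith) (by linarith))
    ((spec_summable hs hb hb').mul_left _)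
  unfold Ir
  rw [← integral_const_mul]
  refine integral_mono_ae (spec_integrable hs (by linarith) (by linarith) J)
    ((spec_integrable hs hb hb' J).const_mul _) ?_
  filter_upwards [spec_ae hs J] with h hh
  rw [← Real.exp_add]
  apply Real.exp_le_exp.mpr
  nlinarith [mul_le_mul_of_nonneg_left hh.1.le hs0, mul_le_mul_of_nonneg_left hh.2.le ht0]

lemma norm_cexp_LR (βL βR : ℂ) (h : ℝ) (J : ℤ) :
    ‖Complex.exp (-βL * (h : ℂ) - βR * ((h : ℂ) + (J : ℂ)))‖ =
      Real.exp (-βL.re * h - βR.re * (h + (J : ℝ))) := by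
  rw [Complex.norm_exp]
  simp

lemma norm_Ic_le (ν : ℤ → Measure ℝ) (βL βR : ℂ) (J : ℤ) :
    ‖Ic ν βL βR J‖ ≤ Ir ν βL.re βR.re J := by
  unfold Ic Ir
  refine (norm_integral_le_integral_norm _).trans ?_
  simp_rw [norm_cexp_LR]; exact le_rfl

lemma norm_Sc_le {T : ℝ} {ν : ℤ → Measure ℝ} (hs : IsSpectrum T ν) {βL βR : ℂ}
    (hL : 0 < βL.re) (hR : 0 < βR.re) : ‖Sc ν βL βR‖ ≤ Fr ν βL.re βR.re :=
  tsum_of_norm_bounded (spec_summable hs hL hR).hasSum (norm_Ic_le ν βL βR)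

lemma Sc_ofReal (ν : ℤ → Measure ℝ) (b b' : ℝ) : Sc ν b b' = (Fr ν b b' : ℂ) := by
  unfold Sc Fr
  rw [Complex.ofReal_tsum]
  congr 1; ext J
  unfold Ic Ir
  rw [← integral_complex_ofReal]
  congr 1; ext h
  push_cast; rfl

lemma Ztilde_eq (A : ℝ) (ν : ℤ → Measure ℝ) (βL βR : ℂ) : Ztilde A ν βL βR =
    Complex.exp ((A : ℂ) * (βL + βR)) *
    ((1 - Complex.exp (-βL)) * (1 - Complex.exp (-βR)) + Sc ν βL βR) := rfl

/-- growth bound at small temperatures. -/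
lemma Fr_le {A T : ℝ} (hA : 0 < A) (hT : 0 < T) {ν : ℤ → Measure ℝ} (hs : IsSpectrum T ν)
    (hm : ModularInvariant A ν) {b b' : ℝ} (hb : 0 < b) (hb' : 0 < b')
    (hb2 : b ≤ 4 * π ^ 2) (hb2' : b' ≤ 4 * π ^ 2) :
    Fr ν b b' ≤ (1 + Fr ν 1 1) * (4 * π ^ 2 / (b * b')) ^ (1 / 2 : ℝ) *
      Real.exp (4 * π ^ 2 * A / b + 4 * π ^ 2 * A / b') := by
  have h1 := hm b b' (by simpa using hb) (by simpa using hb')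
  have e1 : Ztilde A ν b b' = ((Real.exp (A * (b + b')) *
      ((1 - Real.exp (-b)) * (1 - Real.exp (-b')) + Fr ν b b') : ℝ) : ℂ) := by
    rw [Ztilde_eq, Sc_ofReal]; push_cast; rfl
  have e2 : Ztilde A ν (4 * (π : ℂ) ^ 2 / b) (4 * (π : ℂ) ^ 2 / b') =
      ((Real.exp (A * (4 * π ^ 2 / b + 4 * π ^ 2 / b')) *
      ((1 - Real.exp (-(4 * π ^ 2 / b))) * (1 - Real.exp (-(4 * π ^ 2 / b'))) +
        Fr ν (4 * π ^ 2 / b) (4 * π ^ 2 / b')) : ℝ) : ℂ) := by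
    have := Sc_ofReal ν (4 * π ^ 2 / b) (4 * π ^ 2 / b')
    push_cast at this
    rw [Ztilde_eq, this]; push_cast; rfl
  have e3 : ((4 * (π : ℂ) ^ 2) / (b * b')) ^ ((1 : ℂ) / 2) =
      (((4 * π ^ 2 / (b * b')) ^ (1 / 2 : ℝ) : ℝ) : ℂ) := by
    rw [Complex.ofReal_cpow (by positivity)]; push_cast; rfl
  rw [e1, e2, e3, ← Complex.ofReal_mul, Complex.ofReal_inj] at h1
  have p2 : (1 : ℝ) ≤ 4 * π ^ 2 / b := by rw [le_div_iff₀ hb]; linarith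
  have p2' : (1 : ℝ) ≤ 4 * π ^ 2 / b' := by rw [le_div_iff₀ hb']; linarith
  have h2 : Fr ν (4 * π ^ 2 / b) (4 * π ^ 2 / b') ≤ Fr ν 1 1 := by
    have := Fr_shift hs (b := 1) (b' := 1) (s := 4 * π ^ 2 / b - 1) (t := 4 * π ^ 2 / b' - 1)
      one_pos one_pos (by linarith) (by linarith)
    rw [add_sub_cancel, add_sub_cancel] at this
    refine this.trans (mul_le_of_le_one_left (Fr_nonneg _ _ _) ?_)
    rw [Real.exp_le_one_iff]; nlinarith
  have q : ∀ y : ℝ, 0 ≤ y → 0 ≤ 1 - Real.exp (-y) ∧ 1 - Real.exp (-y) ≤ 1 := fun y hy =>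
    ⟨by have := Real.exp_le_one_iff.mpr (neg_nonpos.mpr hy); linarith,
      by have := Real.exp_pos (-y); linarith⟩
  have h3 : Fr ν b b' ≤ Real.exp (A * (b + b')) *
      ((1 - Real.exp (-b)) * (1 - Real.exp (-b')) + Fr ν b b') := by
    have a1 : 1 ≤ Real.exp (A * (b + b')) := Real.one_le_exp (by positivity)
    have a2 := mul_nonneg (q b hb.le).1 (q b' hb'.le).1
    have a3 := Fr_nonneg ν b b'
    nlinarith
  rw [h1] at h3
  refine h3.trans ?_
  have h4 : (1 - Real.exp (-(4 * π ^ 2 / b))) * (1 - Real.exp (-(4 * π ^ 2 / b'))) +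
        Fr ν (4 * π ^ 2 / b) (4 * π ^ 2 / b') ≤ 1 + Fr ν 1 1 := by
    have a1 := q (4 * π ^ 2 / b) (by linarith)
    have a2 := q (4 * π ^ 2 / b') (by linarith)
    have := mul_le_mul a1.2 a2.2 a2.1 zero_le_one
    linarith
  have e5 : A * (4 * π ^ 2 / b + 4 * π ^ 2 / b') = 4 * π ^ 2 * A / b + 4 * π ^ 2 * A / b' := by ring
  rw [e5]
  calc _ ≤ (4 * π ^ 2 / (b * b')) ^ (1 / 2 : ℝ) *
      (Real.exp (4 * π ^ 2 * A / b + 4 * π ^ 2 * A / b') * (1 + Fr ν 1 1)) := by gcongr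
    _ = _ := by ring



lemma half_pow_le {y : ℝ} (hy : 0 ≤ y) : y ^ (1 / 2 : ℝ) ≤ 1 + y := by
  rw [← Real.sqrt_eq_rpow, Real.sqrt_le_left (by positivity)]
  nlinarith

lemma norm_half_cpow (z : ℂ) : ‖z ^ ((1 : ℂ) / 2)‖ = ‖z‖ ^ (1 / 2 : ℝ) := by
  have := Complex.norm_cpow_real z (1 / 2 : ℝ)
  push_cast at this
  exact this

lemma dual_re (β : ℂ) : (4 * (π : ℂ) ^ 2 / β).re = 4 * π ^ 2 * β.re / ‖β‖ ^ 2 := by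
  have : (4 * (π : ℂ) ^ 2 / β) = ((4 * π ^ 2 : ℝ) : ℂ) * β⁻¹ := by push_cast; rw [div_eq_mul_inv]
  rw [this, Complex.re_ofReal_mul, Complex.inv_re, Complex.normSq_eq_norm_sq]
  ring

lemma Fr_err {A T : ℝ} (hA : 0 < A) (hT : 0 < T) {ν : ℤ → Measure ℝ} (hs : IsSpectrum T ν)
    (hm : ModularInvariant A ν) {pL pR N x : ℝ} (hN : 1 ≤ N) (hx : 0 < x) (hx1 : x ≤ 1)
    (hL : 0 < pL) (hL2 : pL ≤ 4 * π ^ 2) (hL3 : 4 * π ^ 2 / pL ≤ N)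
    (hR : 0 < pR) (hR2 : pR ≤ 4 * π ^ 2 / x) (hR3 : 4 * π ^ 2 / pR ≤ x + π ^ 2 / x) :
    Real.exp (A * (pL + pR)) * Fr ν pL pR ≤
      2 * (1 + Fr ν 1 1) * Real.exp (8 * π ^ 2 * A + 4 * π ^ 2 * T + A) * Real.exp ((A + 1) * N) * x⁻¹
        * Real.exp (max (4 * π ^ 2 * (A - T)) (π ^ 2 * A) / x) := by
  set κ := max (4 * π ^ 2 * (A - T)) (π ^ 2 * A) with hκ
  have hF := Fr_nonneg ν 1 1
  have hpi := Real.pi_pos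
  have hpi3 := Real.pi_gt_three
  have hNe : N ≤ Real.exp N := by linarith [Real.add_one_le_exp N]
  have hxi : 1 ≤ x⁻¹ := (one_le_inv₀ hx).mpr hx1
  have hAL : 4 * π ^ 2 * A / pL ≤ A * N := by
    have : 4 * π ^ 2 * A / pL = A * (4 * π ^ 2 / pL) := by ring
    rw [this]; gcongr
  have hLi : 1 / pL ≤ N := by
    refine le_trans ?_ hL3
    gcongr
    nlinarith
  rcases le_total (4 * π ^ 2) pR with hc | hc
  · have h1 := Fr_shift hs (b := pL) (b' := 4 * π ^ 2) (s := 0) (t := pR - 4 * π ^ 2) hL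
      (by positivity) le_rfl (by linarith)
    rw [add_zero, add_sub_cancel, zero_add] at h1
    have h2 := Fr_le hA hT hs hm hL (b' := 4 * π ^ 2) (by positivity) hL2 le_rfl
    have e : 4 * π ^ 2 / (pL * (4 * π ^ 2)) = 1 / pL := by field_simp
    have e' : 4 * π ^ 2 * A / (4 * π ^ 2) = A := by field_simp
    rw [e, e'] at h2
    have h3 : (1 / pL) ^ (1 / 2 : ℝ) ≤ 2 * Real.exp N :=
      (half_pow_le (by positivity)).trans (by linarith)
    have h4 : (A - T) * pR ≤ κ / x := by
      rcases le_total A T with h | h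
      · have : 0 ≤ κ / x := div_nonneg ((by positivity : 0 ≤ π ^ 2 * A).trans (le_max_right _ _)) hx.le
        nlinarith
      · calc (A - T) * pR ≤ (A - T) * (4 * π ^ 2 / x) := by
              apply mul_le_mul_of_nonneg_left hR2; linarith
          _ = 4 * π ^ 2 * (A - T) / x := by ring
          _ ≤ κ / x := by gcongr; exact le_max_left _ _
    calc Real.exp (A * (pL + pR)) * Fr ν pL pR
        ≤ Real.exp (A * (pL + pR)) * (Real.exp (-(pR - 4 * π ^ 2) * T) *
          ((1 + Fr ν 1 1) * (2 * Real.exp N) * Real.exp (A * N + A))) := by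
          gcongr
          refine h1.trans ?_
          gcongr
          refine h2.trans ?_
          gcongr
      _ = 2 * (1 + Fr ν 1 1) * Real.exp (A * pL + 4 * π ^ 2 * T + A + (A + 1) * N + (A - T) * pR) := by
          have : Real.exp (A * (pL + pR)) * Real.exp (-(pR - 4 * π ^ 2) * T) * Real.exp N *
            Real.exp (A * N + A) =
            Real.exp (A * pL + 4 * π ^ 2 * T + A + (A + 1) * N + (A - T) * pR) := by
            rw [← Real.exp_add, ← Real.exp_add, ← Real.exp_add]; congr 1; ring
          linear_combination (2 * (1 + Fr ν 1 1)) * this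
      _ ≤ 2 * (1 + Fr ν 1 1) * Real.exp (8 * π ^ 2 * A + 4 * π ^ 2 * T + A + (A + 1) * N + κ / x) * x⁻¹ := by
          refine le_trans ?_ (le_mul_of_one_le_right (by positivity) hxi)
          have : A * pL ≤ A * (4 * π ^ 2) := by gcongr
          have : 0 ≤ π ^ 2 * A := by positivity
          apply mul_le_mul_of_nonneg_left _ (by positivity)
          apply Real.exp_le_exp.mpr
          linarith
      _ = _ := by rw [Real.exp_add, Real.exp_add]; ring
  · have h2 := Fr_le hA hT hs hm hL hR hL2 hc
    have h3 : (4 * π ^ 2 / (pL * pR)) ^ (1 / 2 : ℝ) ≤ 2 * Real.exp N * x⁻¹ := by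
      have : 4 * π ^ 2 / (pL * pR) ≤ N * x⁻¹ := by
        calc 4 * π ^ 2 / (pL * pR) = (4 * π ^ 2 / pL) * (4 * π ^ 2 / pR) / (4 * π ^ 2) := by field_simp
          _ ≤ N * (x + π ^ 2 / x) / (4 * π ^ 2) := by gcongr
          _ ≤ N * x⁻¹ := by
            rw [div_le_iff₀ (by positivity), mul_assoc]
            gcongr
            have : x ≤ x⁻¹ := hx1.trans hxi
            have e : π ^ 2 / x = π ^ 2 * x⁻¹ := by ring
            rw [e]
            nlinarith
      refine (half_pow_le (by positivity)).trans ?_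
      have h5 : 1 ≤ N * x⁻¹ := one_le_mul_of_one_le_of_one_le hN hxi
      have h6 : N * x⁻¹ ≤ Real.exp N * x⁻¹ := by gcongr
      linarith
    have hAR : 4 * π ^ 2 * A / pR ≤ A + κ / x := by
      calc 4 * π ^ 2 * A / pR = A * (4 * π ^ 2 / pR) := by ring
        _ ≤ A * (x + π ^ 2 / x) := by gcongr
        _ = A * x + π ^ 2 * A / x := by ring
        _ ≤ A * 1 + κ / x := by gcongr; exact le_max_right _ _
        _ = _ := by ring
    calc Real.exp (A * (pL + pR)) * Fr ν pL pR
        ≤ Real.exp (A * (4 * π ^ 2 + 4 * π ^ 2)) * 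
          ((1 + Fr ν 1 1) * (2 * Real.exp N * x⁻¹) * Real.exp (A * N + (A + κ / x))) := by
          have := Fr_nonneg ν pL pR
          gcongr
          refine h2.trans ?_
          gcongr
      _ = 2 * (1 + Fr ν 1 1) * Real.exp (8 * π ^ 2 * A + 0 + A + (A + 1) * N + κ / x) * x⁻¹ := by
          have : Real.exp (A * (4 * π ^ 2 + 4 * π ^ 2)) * Real.exp N *
            Real.exp (A * N + (A + κ / x)) =
            Real.exp (8 * π ^ 2 * A + 0 + A + (A + 1) * N + κ / x) := by
            rw [← Real.exp_add, ← Real.exp_add]; congr 1; ring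
          linear_combination (2 * (1 + Fr ν 1 1) * x⁻¹) * this
      _ ≤ 2 * (1 + Fr ν 1 1) * Real.exp (8 * π ^ 2 * A + 4 * π ^ 2 * T + A + (A + 1) * N + κ / x) * x⁻¹ := by
          gcongr; positivity
      _ = _ := by rw [Real.exp_add, Real.exp_add]; ring

lemma err_bound {A T : ℝ} (hA : 0 < A) (hT : 0 < T) {ν : ℤ → Measure ℝ} (hs : IsSpectrum T ν)
    (hm : ModularInvariant A ν) : ∃ C κ : ℝ, 0 < C ∧ 0 < κ ∧ κ < 4 * π ^ 2 * A ∧ ∀ βL βR : ℂ,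
      1 ≤ βL.re → 0 < βR.re → βR.re ≤ 1 → |βR.im| ≤ π →
      ‖(4 * (π : ℂ) ^ 2 / (βL * βR)) ^ ((1 : ℂ) / 2) *
        (Complex.exp ((A : ℂ) * (4 * (π : ℂ) ^ 2 / βL + 4 * (π : ℂ) ^ 2 / βR)) *
         Sc ν (4 * (π : ℂ) ^ 2 / βL) (4 * (π : ℂ) ^ 2 / βR))‖ ≤
      C * Real.exp ((A + 1) * ‖βL‖ ^ 2) * (βR.re)⁻¹ ^ 2 * Real.exp (κ / βR.re) := by
  have hF := Fr_nonneg ν 1 1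
  have hpi := Real.pi_pos
  have hpi3 := Real.pi_gt_three
  refine ⟨(8 * π ^ 2) * (2 * (1 + Fr ν 1 1) * Real.exp (8 * π ^ 2 * A + 4 * π ^ 2 * T + A)),
    max (4 * π ^ 2 * (A - T)) (π ^ 2 * A), by positivity,
    lt_of_lt_of_le (by positivity : 0 < π ^ 2 * A) (le_max_right _ _), ?_, ?_⟩
  · have := mul_pos (pow_pos hpi 2) hA
    have := mul_pos (pow_pos hpi 2) hT
    apply max_lt <;> nlinarith
  intro βL βR h1 h0 h01 him
  have nL : 1 ≤ ‖βL‖ := h1.trans (Complex.re_le_norm _)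
  have nR : βR.re ≤ ‖βR‖ := (Complex.re_le_norm _)
  have nR0 : 0 < ‖βR‖ := h0.trans_le nR
  have sqL : ‖βL‖ ^ 2 = βL.re ^ 2 + βL.im ^ 2 := by
    rw [← Complex.normSq_eq_norm_sq, Complex.normSq_apply]; ring
  have sqR : ‖βR‖ ^ 2 = βR.re ^ 2 + βR.im ^ 2 := by
    rw [← Complex.normSq_eq_norm_sq, Complex.normSq_apply]; ring
  have hL : 0 < (4 * (π : ℂ) ^ 2 / βL).re := by rw [dual_re]; positivity
  have hR : 0 < (4 * (π : ℂ) ^ 2 / βR).re := by rw [dual_re]; positivity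
  have h2 : ‖βR.im‖ ^ 2 ≤ π ^ 2 := by
    rw [Real.norm_eq_abs]; gcongr
  rw [Real.norm_eq_abs, sq_abs] at h2
  have key := Fr_err hA hT hs hm (pL := (4 * (π : ℂ) ^ 2 / βL).re)
    (pR := (4 * (π : ℂ) ^ 2 / βR).re) (N := ‖βL‖ ^ 2) (x := βR.re)
    (one_le_pow₀ nL) h0 h01 hL
    (by rw [dual_re, div_le_iff₀ (by positivity), sqL]; gcongr; nlinarith [sq_nonneg βL.im])
    (by
      rw [dual_re]
      have e : 4 * π ^ 2 / (4 * π ^ 2 * βL.re / ‖βL‖ ^ 2) = ‖βL‖ ^ 2 / βL.re := by field_simp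
      rw [e]; exact div_le_self (by positivity) h1) hR
    (by
      rw [dual_re, div_le_div_iff₀ (by positivity) h0, sqR]
      nlinarith [mul_nonneg (sq_nonneg π) (sq_nonneg βR.im)])
    (by
      rw [dual_re]
      have e : 4 * π ^ 2 / (4 * π ^ 2 * βR.re / ‖βR‖ ^ 2) = ‖βR‖ ^ 2 / βR.re := by field_simp
      rw [e, sqR, div_le_iff₀ h0]
      have e2 : (βR.re + π ^ 2 / βR.re) * βR.re = βR.re ^ 2 + π ^ 2 := by field_simp
      rw [e2]; linarith)
  rw [norm_mul, norm_mul, norm_half_cpow]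
  have b1 : ‖4 * (π : ℂ) ^ 2 / (βL * βR)‖ ≤ 4 * π ^ 2 * (βR.re)⁻¹ := by
    rw [norm_div, norm_mul, norm_mul, norm_pow, Complex.norm_real, Real.norm_of_nonneg hpi.le,
      Complex.norm_ofNat, div_eq_mul_inv]
    gcongr
    nlinarith
  have hxi : 1 ≤ (βR.re)⁻¹ := (one_le_inv₀ h0).mpr h01
  have b2 : ‖4 * (π : ℂ) ^ 2 / (βL * βR)‖ ^ (1 / 2 : ℝ) ≤ 8 * π ^ 2 * (βR.re)⁻¹ := by
    refine (half_pow_le (norm_nonneg _)).trans ?_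
    nlinarith
  have b3 : ‖Complex.exp ((A : ℂ) * (4 * (π : ℂ) ^ 2 / βL + 4 * (π : ℂ) ^ 2 / βR))‖ =
      Real.exp (A * ((4 * (π : ℂ) ^ 2 / βL).re + (4 * (π : ℂ) ^ 2 / βR).re)) := by
    rw [Complex.norm_exp, Complex.re_ofReal_mul, Complex.add_re]
  rw [← b3] at key
  have b4 := (mul_le_mul_of_nonneg_left (norm_Sc_le hs hL hR) (norm_nonneg _)).trans key
  refine (mul_le_mul b2 b4 (by positivity) (by positivity)).trans (le_of_eq ?_)
  ring



/-- Laplace transform of `ν J`. -/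
def Lap (ν : ℤ → Measure ℝ) (J : ℤ) (s : ℂ) : ℂ := ∫ h : ℝ, Complex.exp (-s * (h : ℂ)) ∂(ν J)

lemma Ic_eq (ν : ℤ → Measure ℝ) (s β : ℂ) (J : ℤ) :
    Ic ν (s - β) β J = Complex.exp (-β * J) * Lap ν J s := by
  unfold Ic Lap
  rw [← integral_const_mul]
  congr 1; ext h
  rw [← Complex.exp_add]
  congr 1; ring

/-- the contour variable -/
def bR (x θ : ℝ) : ℂ := (x : ℂ) + (θ : ℂ) * Complex.I

@[simp] lemma bR_re (x θ : ℝ) : (bR x θ).re = x := by simp [bR]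
@[simp] lemma bR_im (x θ : ℝ) : (bR x θ).im = θ := by simp [bR]

lemma continuous_bR (x : ℝ) : Continuous (bR x) := by unfold bR; fun_prop

def Qf (ν : ℤ → Measure ℝ) (J : ℤ) (s : ℂ) (x θ : ℝ) : ℂ :=
  Complex.exp (bR x θ * J) * Sc ν (s - bR x θ) (bR x θ)

lemma Qf_eq (ν : ℤ → Measure ℝ) (J : ℤ) (s : ℂ) (x θ : ℝ) :
    Qf ν J s x θ = ∑' J' : ℤ, Complex.exp (bR x θ * (J - J')) * Lap ν J' s := by
  unfold Qf Sc
  rw [← tsum_mul_left]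
  congr 1; ext J'
  rw [Ic_eq, ← mul_assoc, ← Complex.exp_add]
  congr 2; ring

lemma Qf_term_norm (ν : ℤ → Measure ℝ) (J J' : ℤ) (s : ℂ) (x θ : ℝ) :
    ‖Complex.exp (bR x θ * (J - J')) * Lap ν J' s‖ ≤ Real.exp (x * J) * Ir ν (s.re - x) x J' := by
  have e : Complex.exp (bR x θ * (J - J')) * Lap ν J' s =
      Complex.exp (bR x θ * J) * Ic ν (s - bR x θ) (bR x θ) J' := by
    rw [Ic_eq, ← mul_assoc, ← Complex.exp_add]
    congr 2; ring
  rw [e, norm_mul, Complex.norm_exp]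
  have h := norm_Ic_le ν (s - bR x θ) (bR x θ) J'
  simp only [Complex.sub_re, bR_re] at h
  have e2 : (bR x θ * J).re = x * J := by simp
  rw [e2]
  gcongr

lemma continuous_Qf {T : ℝ} {ν : ℤ → Measure ℝ} (hs : IsSpectrum T ν) (J : ℤ) {s : ℂ} {x : ℝ}
    (hx : 0 < x) (hxs : x < s.re) : Continuous (Qf ν J s x) := by
  have : Qf ν J s x = fun θ => ∑' J' : ℤ, Complex.exp (bR x θ * (J - J')) * Lap ν J' s := by
    ext θ; exact Qf_eq ν J s x θ
  rw [this]
  refine continuous_tsum (fun J' => ?_)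
    ((spec_summable hs (b := s.re - x) (b' := x) (by linarith) hx).mul_left (Real.exp (x * J)))
    (fun J' θ => Qf_term_norm ν J J' s x θ)
  have := continuous_bR x
  fun_prop

lemma integral_char (x : ℝ) (k : ℤ) :
    ∫ θ in (-π)..π, Complex.exp (bR x θ * k) = if k = 0 then 2 * (π : ℂ) else 0 := by
  split_ifs with h
  · subst h
    simp; ring
  · have e : ∀ θ : ℝ, Complex.exp (bR x θ * k) =
        Complex.exp (x * k) * Complex.exp ((Complex.I * k) * θ) := by
      intro θ; rw [← Complex.exp_add]; congr 1; unfold bR; ring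
    simp_rw [e]
    have hk : Complex.I * (k : ℂ) ≠ 0 := mul_ne_zero Complex.I_ne_zero (by exact_mod_cast h)
    rw [intervalIntegral.integral_const_mul, integral_exp_mul_complex hk]
    have : Complex.exp (Complex.I * k * (π : ℝ)) = Complex.exp (Complex.I * k * ((-π : ℝ) : ℂ)) := by
      rw [Complex.exp_eq_exp_iff_exists_int]
      refine ⟨k, ?_⟩
      push_cast; ring
    rw [this]; simp

lemma fourier_extract {T : ℝ} {ν : ℤ → Measure ℝ} (hs : IsSpectrum T ν) (J : ℤ) {s : ℂ} {x : ℝ}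
    (hx : 0 < x) (hxs : x < s.re) :
    ∫ θ in (-π)..π, Qf ν J s x θ = 2 * (π : ℂ) * Lap ν J s := by
  have hsum := (spec_summable hs (b := s.re - x) (b' := x) (by linarith) hx).mul_left
    (Real.exp (x * J))
  have := continuous_bR x
  have h := intervalIntegral.hasSum_integral_of_dominated_convergence (μ := volume) (a := -π) (b := π)
    (F := fun (J' : ℤ) (θ : ℝ) => Complex.exp (bR x θ * (J - J')) * Lap ν J' s)
    (f := Qf ν J s x)
    (fun J' _ => Real.exp (x * J) * Ir ν (s.re - x) x J')
    (fun J' => by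
      apply Continuous.aestronglyMeasurable
      fun_prop)
    (fun J' => Eventually.of_forall fun θ _ => Qf_term_norm ν J J' s x θ)
    (Eventually.of_forall fun _ _ => hsum)
    (by simp)
    (Eventually.of_forall fun θ _ => by
      rw [Qf_eq]
      exact (Summable.of_norm_bounded hsum fun J' => Qf_term_norm ν J J' s x θ).hasSum)
  rw [← h.tsum_eq, tsum_eq_single J]
  · simp only [sub_self, mul_zero, Complex.exp_zero, one_mul, intervalIntegral.integral_const]
    rw [Complex.real_smul]; push_cast; ring
  · intro J' hJ'
    rw [intervalIntegral.integral_mul_const]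
    have := integral_char x (J - J')
    rw [if_neg (by omega)] at this
    push_cast at this
    rw [this, zero_mul]



/-- vacuum contribution in the dual channel -/
def Pf (A : ℝ) (J : ℤ) (s : ℂ) (x θ : ℝ) : ℂ :=
  Complex.exp (bR x θ * J) * (Complex.exp (-(A * s)) *
    ((4 * (π : ℂ) ^ 2 / ((s - bR x θ) * bR x θ)) ^ ((1 : ℂ) / 2) *
      (Complex.exp ((A : ℂ) * (4 * (π : ℂ) ^ 2 / (s - bR x θ) + 4 * (π : ℂ) ^ 2 / bR x θ)) *
        ((1 - Complex.exp (-(4 * (π : ℂ) ^ 2 / (s - bR x θ)))) *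
          (1 - Complex.exp (-(4 * (π : ℂ) ^ 2 / bR x θ)))))))

lemma Qf_sub_Pf {A : ℝ} {ν : ℤ → Measure ℝ}
    (hm : ModularInvariant A ν) (J : ℤ) {s : ℂ} {x : ℝ} (hx : 0 < x) (hxs : x < s.re) (θ : ℝ) :
    Qf ν J s x θ - Pf A J s x θ =
      Complex.exp (bR x θ * J) * (Complex.exp (-(A * s)) *
    ((4 * (π : ℂ) ^ 2 / ((s - bR x θ) * bR x θ)) ^ ((1 : ℂ) / 2) *
      (Complex.exp ((A : ℂ) * (4 * (π : ℂ) ^ 2 / (s - bR x θ) + 4 * (π : ℂ) ^ 2 / bR x θ)) *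
        Sc ν (4 * (π : ℂ) ^ 2 / (s - bR x θ)) (4 * (π : ℂ) ^ 2 / bR x θ)))
        - (1 - Complex.exp (-(s - bR x θ))) * (1 - Complex.exp (-bR x θ))) := by
  have h := hm (s - bR x θ) (bR x θ) (by simpa using hxs) (by simpa using hx)
  rw [Ztilde_eq, Ztilde_eq, sub_add_cancel] at h
  unfold Qf Pf
  have e : Complex.exp (-(A * s)) * Complex.exp (A * s) = 1 := by
    rw [← Complex.exp_add]; simp
  linear_combination (Complex.exp (bR x θ * J) * Complex.exp (-(A * s))) * h -
    (Complex.exp (bR x θ * J) * ((1 - Complex.exp (-(s - bR x θ))) * (1 - Complex.exp (-bR x θ))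
      + Sc ν (s - bR x θ) (bR x θ))) * e

lemma norm_one_sub_exp_le {u : ℂ} (hu : 0 ≤ u.re) : ‖1 - Complex.exp (-u)‖ ≤ 2 := by
  refine (norm_sub_le _ _).trans ?_
  rw [norm_one, Complex.norm_exp]
  have : Real.exp (-u).re ≤ 1 := by rw [Real.exp_le_one_iff]; simpa using hu
  linarith

lemma norm_one_sub_exp_le' {u : ℂ} (hu : 0 ≤ u.re) : ‖1 - Complex.exp (-u)‖ ≤ 2 * ‖u‖ := by
  rcases le_total ‖u‖ 1 with h | h
  · have := Complex.norm_exp_sub_one_le (x := -u) (by simpa using h)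
    rw [norm_sub_rev]; simpa using this
  · exact (norm_one_sub_exp_le hu).trans (by linarith)

/-- the point on the line `Re s = 2` -/
def sw (w : ℝ) : ℂ := 2 - (w : ℂ) * Complex.I

@[simp] lemma sw_re (w : ℝ) : (sw w).re = 2 := by simp [sw]
@[simp] lemma sw_im (w : ℝ) : (sw w).im = -w := by simp [sw]

lemma bR_ne {x : ℝ} (hx : 0 < x) (θ : ℝ) : bR x θ ≠ 0 := by
  intro h
  have := congrArg Complex.re h
  simp at this; linarith

lemma dual_re_pos {β : ℂ} (h : 0 < β.re) : 0 < (4 * (π : ℂ) ^ 2 / β).re := by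
  have : 0 < ‖β‖ := h.trans_le (Complex.re_le_norm _)
  have := Real.pi_pos
  rw [dual_re]; positivity

lemma continuous_Pf (A : ℝ) (J : ℤ) {s : ℂ} {x : ℝ} (hx : 0 < x) (hxs : x < s.re) :
    Continuous (Pf A J s x) := by
  have hb := continuous_bR x
  have h1 : ∀ θ, bR x θ ≠ 0 := bR_ne hx
  have h2 : ∀ θ, s - bR x θ ≠ 0 := by
    intro θ h
    have := congrArg Complex.re h
    simp at this; linarith
  have h3 : Continuous fun θ => (4 * (π : ℂ) ^ 2 / ((s - bR x θ) * bR x θ)) ^ ((1 : ℂ) / 2) := by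
    refine Continuous.cpow (by
      refine Continuous.div (by fun_prop) (by fun_prop) fun θ => mul_ne_zero (h2 θ) (h1 θ))
      continuous_const (fun θ => ?_)
    rw [Complex.mem_slitPlane_iff_arg]
    have hne : 4 * (π : ℂ) ^ 2 / ((s - bR x θ) * bR x θ) ≠ 0 := by
      have : (π : ℂ) ≠ 0 := by exact_mod_cast Real.pi_ne_zero
      exact div_ne_zero (by simp [this]) (mul_ne_zero (h2 θ) (h1 θ))
    refine ⟨?_, hne⟩
    have a1 := Complex.abs_arg_lt_pi_div_two_iff.mpr (Or.inl (show 0 < (bR x θ).re by simpa using hx))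
    have a2 := Complex.abs_arg_lt_pi_div_two_iff.mpr (Or.inl (show 0 < (s - bR x θ).re by simpa using hxs))
    rw [abs_lt] at a1 a2
    have e1 : ((s - bR x θ) * bR x θ).arg = (s - bR x θ).arg + (bR x θ).arg := by
      apply Complex.arg_mul (h2 θ) (h1 θ)
      constructor <;> linarith
    have e2 : 4 * (π : ℂ) ^ 2 / ((s - bR x θ) * bR x θ) =
        ((4 * π ^ 2 : ℝ) : ℂ) * ((s - bR x θ) * bR x θ)⁻¹ := by
      push_cast; rw [div_eq_mul_inv]
    rw [e2, Complex.arg_real_mul _ (by have := Real.pi_pos; positivity), Complex.arg_inv, if_neg (by rw [e1]; linarith), e1]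
    linarith
  unfold Pf
  refine Continuous.mul (by fun_prop) (continuous_const.mul (h3.mul ?_))
  have h4 : Continuous fun θ => 4 * (π : ℂ) ^ 2 / (s - bR x θ) :=
    Continuous.div (by fun_prop) (by fun_prop) h2
  have h5 : Continuous fun θ => 4 * (π : ℂ) ^ 2 / (bR x θ) :=
    Continuous.div (by fun_prop) (by fun_prop) h1
  fun_prop

lemma Lap_sub_main {A T : ℝ} (hA : 0 < A) (hT : 0 < T) {ν : ℤ → Measure ℝ} (hs : IsSpectrum T ν)
    (hm : ModularInvariant A ν) : ∃ C κ : ℝ, 0 < C ∧ 0 < κ ∧ κ < 4 * π ^ 2 * A ∧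
    ∀ (J : ℤ) (x w : ℝ), 0 < x → x ≤ 1 →
      ‖2 * (π : ℂ) * Lap ν J (sw w) - ∫ θ in (-π)..π, Pf A J (sw w) x θ‖ ≤
        C * Real.exp (2 * (A + 1) * w ^ 2) * x⁻¹ ^ 2 * Real.exp (κ / x) * Real.exp (x * J) := by
  obtain ⟨C, κ, hC, hκ, hκ2, hb⟩ := err_bound hA hT hs hm
  have hpi := Real.pi_pos
  refine ⟨(C * Real.exp ((A + 1) * (4 + 2 * π ^ 2)) + 4) * (2 * π), κ, by positivity, hκ, hκ2, ?_⟩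
  intro J x w hx hx1
  have hxs : x < (sw w).re := by simp; linarith
  rw [← fourier_extract hs J hx hxs, ← intervalIntegral.integral_sub
    ((continuous_Qf hs J hx hxs).intervalIntegrable _ _)
    ((continuous_Pf A J hx hxs).intervalIntegrable _ _)]
  have key : ∀ θ ∈ Set.uIoc (-π) π, ‖Qf ν J (sw w) x θ - Pf A J (sw w) x θ‖ ≤
      (C * Real.exp ((A + 1) * (4 + 2 * π ^ 2)) + 4) * Real.exp (2 * (A + 1) * w ^ 2) *
        x⁻¹ ^ 2 * Real.exp (κ / x) * Real.exp (x * J) := by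
    intro θ hθ
    rw [Set.uIoc_of_le (by linarith)] at hθ
    have hθ2 : |θ| ≤ π := abs_le.mpr ⟨hθ.1.le, hθ.2⟩
    rw [Qf_sub_Pf hm J hx hxs, norm_mul, Complex.norm_exp]
    have e1 : (bR x θ * J).re = x * J := by simp
    rw [e1, mul_comm]
    gcongr
    refine (norm_sub_le _ _).trans ?_
    rw [norm_mul]
    have n1 : ‖Complex.exp (-(A * sw w))‖ ≤ 1 := by
      rw [Complex.norm_exp, Real.exp_le_one_iff]; simp; linarith
    have n2 := hb (sw w - bR x θ) (bR x θ) (by simp; linarith) (by simpa using hx)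
      (by simpa using hx1) (by simpa using hθ2)
    have n3 : ‖(1 - Complex.exp (-(sw w - bR x θ))) * (1 - Complex.exp (-bR x θ))‖ ≤ 4 := by
      rw [norm_mul]
      have := mul_le_mul (norm_one_sub_exp_le (u := sw w - bR x θ) (by simp; linarith))
        (norm_one_sub_exp_le (u := bR x θ) (by simp; linarith)) (norm_nonneg _) (by norm_num)
      linarith
    have n4 : ‖sw w - bR x θ‖ ^ 2 ≤ 4 + 2 * π ^ 2 + 2 * w ^ 2 := by
      rw [← Complex.normSq_eq_norm_sq, Complex.normSq_apply]
      simp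
      have : θ ^ 2 ≤ π ^ 2 := by rw [← sq_abs]; gcongr
      nlinarith [sq_nonneg (w - θ)]
    rw [bR_re] at n2
    have n5 : 1 ≤ Real.exp (2 * (A + 1) * w ^ 2) * x⁻¹ ^ 2 * Real.exp (κ / x) := by
      have a1 : 1 ≤ Real.exp (2 * (A + 1) * w ^ 2) := Real.one_le_exp (by positivity)
      have a2 : 1 ≤ x⁻¹ ^ 2 := one_le_pow₀ ((one_le_inv₀ hx).mpr hx1)
      have a3 : 1 ≤ Real.exp (κ / x) := Real.one_le_exp (by positivity)
      exact one_le_mul_of_one_le_of_one_le (one_le_mul_of_one_le_of_one_le a1 a2) a3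
    have n6 : Real.exp ((A + 1) * ‖sw w - bR x θ‖ ^ 2) ≤
        Real.exp ((A + 1) * (4 + 2 * π ^ 2)) * Real.exp (2 * (A + 1) * w ^ 2) := by
      rw [← Real.exp_add]; apply Real.exp_le_exp.mpr
      nlinarith
    refine (add_le_add (mul_le_mul n1 n2 (norm_nonneg _) zero_le_one) n3).trans ?_
    calc 1 * (C * Real.exp ((A + 1) * ‖sw w - bR x θ‖ ^ 2) * x⁻¹ ^ 2 * Real.exp (κ / x)) + 4
        ≤ C * (Real.exp ((A + 1) * (4 + 2 * π ^ 2)) * Real.exp (2 * (A + 1) * w ^ 2)) * x⁻¹ ^ 2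
          * Real.exp (κ / x) + 4 * (Real.exp (2 * (A + 1) * w ^ 2) * x⁻¹ ^ 2 * Real.exp (κ / x)) := by
          rw [one_mul]
          gcongr
          linarith
      _ = _ := by ring
  refine (intervalIntegral.norm_integral_le_of_norm_le_const key).trans (le_of_eq ?_)
  rw [abs_of_nonneg (by linarith)]
  ring



lemma real_mul_half_cpow {c : ℝ} (hc : 0 < c) (z : ℂ) (hz : z ≠ 0) :
    ((c : ℂ) * z) ^ ((1 : ℂ) / 2) = (Real.sqrt c : ℂ) * z ^ ((1 : ℂ) / 2) := by
  have hc' : (c : ℂ) ≠ 0 := by exact_mod_cast hc.ne'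
  rw [Complex.cpow_def_of_ne_zero (mul_ne_zero hc' hz), Complex.log_ofReal_mul hc hz, add_mul,
    Complex.exp_add, Complex.cpow_def_of_ne_zero hz]
  congr 1
  rw [Real.sqrt_eq_rpow, Real.rpow_def_of_pos hc]
  push_cast; rfl

/-- `a = 2π√A` -/
def aA (A : ℝ) : ℝ := 2 * π * Real.sqrt A

lemma aA_pos {A : ℝ} (hA : 0 < A) : 0 < aA A := by
  have := Real.pi_pos
  have := Real.sqrt_pos.mpr hA
  unfold aA; positivity

lemma aA_sq {A : ℝ} (hA : 0 < A) : aA A ^ 2 = 4 * π ^ 2 * A := by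
  unfold aA; rw [mul_pow, Real.sq_sqrt hA.le]; ring

/-- The left factor -/
def Hf (A : ℝ) (s β z : ℂ) : ℂ :=
  Complex.exp (-(A * s)) *
    ((4 * (π : ℂ) ^ 2 / ((s - β) * z)) ^ ((1 : ℂ) / 2) *
      (Complex.exp ((A : ℂ) * (4 * (π : ℂ) ^ 2 / (s - β))) *
        ((1 - Complex.exp (-(4 * (π : ℂ) ^ 2 / (s - β)))))))

def Gf (A : ℝ) (s : ℂ) (r t : ℝ) : ℂ :=
  Complex.exp (-(aA A * t ^ 2 / bR 1 (t / r))) *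
    (Hf A s (bR (aA A / r ^ 2) (aA A * t / r ^ 3)) (bR 1 (t / r)) *
          (1 - Complex.exp (-(4 * (π : ℂ) ^ 2 / bR (aA A / r ^ 2) (aA A * t / r ^ 3)))))

lemma Pf_eq_Gf {A : ℝ} (hA : 0 < A) {J : ℤ} {s : ℂ} {r t : ℝ} (hr : 0 < r) (hJ : (J : ℝ) = r ^ 4)
    (hs : aA A / r ^ 2 < s.re) :
    Pf A J s (aA A / r ^ 2) (aA A * t / r ^ 3) =
      (Real.exp (2 * aA A * r ^ 2) * (r / Real.sqrt (aA A)) : ℝ) * Gf A s r t := by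
  have ha := aA_pos hA
  have hx : 0 < aA A / r ^ 2 := by positivity
  set z := bR 1 (t / r) with hz
  set β := bR (aA A / r ^ 2) (aA A * t / r ^ 3) with hβ
  have hz0 : z ≠ 0 := bR_ne one_pos _
  have hβ0 : β ≠ 0 := bR_ne hx _
  have hr' : (r : ℂ) ≠ 0 := by exact_mod_cast hr.ne'
  have ha' : (aA A : ℂ) ≠ 0 := by exact_mod_cast ha.ne'
  have hL0 : s - β ≠ 0 := by
    intro h
    have := congrArg Complex.re h
    simp [hβ] at this; linarith
  have eβ : β = ((aA A / r ^ 2 : ℝ) : ℂ) * z := by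
    rw [hβ, hz]; unfold bR; push_cast; field_simp
  have hpi : (π : ℂ) ≠ 0 := by exact_mod_cast Real.pi_ne_zero
  have eJ : (J : ℂ) = (r : ℂ) ^ 4 := by exact_mod_cast congrArg (fun y : ℝ => (y : ℂ)) hJ
  have ea : 4 * (π : ℂ) ^ 2 * A = (aA A : ℂ) ^ 2 := by
    have := aA_sq hA
    exact_mod_cast congrArg (fun y : ℝ => (y : ℂ)) this.symm
  have e1 : (4 * (π : ℂ) ^ 2 / ((s - β) * β)) ^ ((1 : ℂ) / 2) =
      ((r / Real.sqrt (aA A) : ℝ) : ℂ) * (4 * (π : ℂ) ^ 2 / ((s - β) * z)) ^ ((1 : ℂ) / 2) := by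
    have : 4 * (π : ℂ) ^ 2 / ((s - β) * β) = ((r ^ 2 / aA A : ℝ) : ℂ) *
        (4 * (π : ℂ) ^ 2 / ((s - β) * z)) := by
      rw [show (s - β) * β = (s - β) * (((aA A / r ^ 2 : ℝ) : ℂ) * z) by rw [← eβ]]
      push_cast; field_simp
    rw [this, real_mul_half_cpow (by positivity), Real.sqrt_div (by positivity), Real.sqrt_sq hr.le]
    exact div_ne_zero (by simp [hpi]) (mul_ne_zero hL0 hz0)
  have e2 : Complex.exp (β * J) * Complex.exp ((A : ℂ) * (4 * (π : ℂ) ^ 2 / (s - β) + 4 * (π : ℂ) ^ 2 / β))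
      = Complex.exp (2 * aA A * r ^ 2) * Complex.exp (-(aA A * t ^ 2 / z)) *
        Complex.exp ((A : ℂ) * (4 * (π : ℂ) ^ 2 / (s - β))) := by
    rw [← Complex.exp_add, ← Complex.exp_add, ← Complex.exp_add, mul_add]
    congr 1
    have : β * J + A * (4 * (π : ℂ) ^ 2 / β) = 2 * aA A * r ^ 2 + -(aA A * t ^ 2 / z) := by
      have : (A : ℂ) * (4 * (π : ℂ) ^ 2 / β) = (aA A : ℂ) ^ 2 / β := by rw [← ea]; ring
      rw [this, eJ, eβ]
      have hzz : (z - 1) ^ 2 = -((t : ℂ) / r) ^ 2 := by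
        rw [hz]; unfold bR; push_cast
        ring_nf; rw [Complex.I_sq]; ring
      push_cast
      have e3 : (t : ℂ) ^ 2 = - (r : ℂ) ^ 2 * (z - 1) ^ 2 := by rw [hzz]; field_simp
      rw [e3]
      field_simp
      ring
    linear_combination this
  unfold Pf Gf Hf
  rw [← hβ, ← hz, e1]
  push_cast
  linear_combination (Complex.exp (-(A * s)) *
    ((r / Real.sqrt (aA A) : ℂ) * (4 * (π : ℂ) ^ 2 / ((s - β) * z)) ^ ((1 : ℂ) / 2)) * 
     ((1 - Complex.exp (-(4 * (π : ℂ) ^ 2 / (s - β)))) *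
          (1 - Complex.exp (-(4 * (π : ℂ) ^ 2 / β))))) * e2

lemma dom_exp {a : ℝ} (ha : 0 < a) : ∃ K : ℝ, 0 < K ∧ ∀ r t : ℝ, 1 ≤ r → |t| ≤ π * r ^ 3 / a →
    Real.exp (-(a * t ^ 2 / (1 + (t / r) ^ 2))) ≤ K * (1 + t ^ 2)⁻¹ := by
  have hpi := Real.pi_pos
  refine ⟨(1 + 2 / a) + 96 * π ^ 2 / a ^ 5, by positivity, fun r t hr ht => ?_⟩
  have hr0 : 0 < r := by linarith
  have hq : 0 < 1 + (t / r) ^ 2 := by positivity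
  rw [Real.exp_neg, ← div_eq_mul_inv, le_div_iff₀ (by positivity), ← div_eq_inv_mul,
    div_le_iff₀ (Real.exp_pos _)]
  rcases le_total (t ^ 2) (r ^ 2) with h | h
  · have h1 : a * t ^ 2 / 2 ≤ a * t ^ 2 / (1 + (t / r) ^ 2) := by
      gcongr
      have : (t / r) ^ 2 ≤ 1 := by rw [div_pow, div_le_one (by positivity)]; exact h
      linarith
    have h2 := Real.add_one_le_exp (a * t ^ 2 / 2)
    have h3 := h2.trans (Real.exp_le_exp.mpr h1)
    have h4 : 1 + t ^ 2 ≤ (1 + 2 / a) * (a * t ^ 2 / 2 + 1) := by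
      have : (1 + 2 / a) * (a * t ^ 2 / 2 + 1) = a * t ^ 2 / 2 + 1 + t ^ 2 + 2 / a := by
        field_simp; ring
      rw [this]
      have : 0 ≤ a * t ^ 2 / 2 := by positivity
      have : 0 ≤ 2 / a := by positivity
      linarith
    calc 1 + t ^ 2 ≤ (1 + 2 / a) * (a * t ^ 2 / 2 + 1) := h4
      _ ≤ ((1 + 2 / a) + 96 * π ^ 2 / a ^ 5) * Real.exp (a * t ^ 2 / (1 + (t / r) ^ 2)) := by
        have : 0 ≤ 96 * π ^ 2 / a ^ 5 := by positivity
        exact mul_le_mul (by linarith) h3 (by positivity) (by positivity)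
  · have h1 : a * r ^ 2 / 2 ≤ a * t ^ 2 / (1 + (t / r) ^ 2) := by
      have e : a * t ^ 2 / (1 + (t / r) ^ 2) = a * t ^ 2 * r ^ 2 / (r ^ 2 + t ^ 2) := by
        field_simp
      rw [e, div_le_div_iff₀ (by norm_num) (by positivity)]
      nlinarith [mul_nonneg ha.le (sq_nonneg r)]
    have h2 : (a * r ^ 2 / 2) ^ 3 / 6 ≤ Real.exp (a * r ^ 2 / 2) := by
      have := Real.pow_div_factorial_le_exp (a * r ^ 2 / 2) (by positivity) 3
      simpa [Nat.factorial] using this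
    have h3 := h2.trans (Real.exp_le_exp.mpr h1)
    have h4 : (a * |t|) ^ 2 ≤ (π * r ^ 3) ^ 2 := by
      rw [le_div_iff₀ ha] at ht
      exact pow_le_pow_left₀ (by positivity) (by linarith) 2
    rw [mul_pow, sq_abs] at h4
    have h5 : t ^ 2 * 2 ≤ 96 * π ^ 2 / a ^ 5 * ((a * r ^ 2 / 2) ^ 3 / 6) := by
      have : 96 * π ^ 2 / a ^ 5 * ((a * r ^ 2 / 2) ^ 3 / 6) = 2 * (π * r ^ 3) ^ 2 / a ^ 2 := by
        field_simp; ring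
      rw [this, le_div_iff₀ (by positivity)]
      linarith
    have h6 : 1 ≤ r ^ 2 := one_le_pow₀ hr
    calc 1 + t ^ 2 ≤ 96 * π ^ 2 / a ^ 5 * ((a * r ^ 2 / 2) ^ 3 / 6) := by linarith
      _ ≤ ((1 + 2 / a) + 96 * π ^ 2 / a ^ 5) * Real.exp (a * t ^ 2 / (1 + (t / r) ^ 2)) := by
        have : 0 ≤ 1 + 2 / a := by positivity
        exact mul_le_mul (by linarith) h3 (by positivity) (by positivity)



lemma one_le_norm_bR (τ : ℝ) : 1 ≤ ‖bR 1 τ‖ := by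
  have := Complex.re_le_norm (bR 1 τ); simpa using this

lemma norm_sub_bR_ge {w x θ : ℝ} (hx1 : x ≤ 1) (hθ : |θ| ≤ π) :
    1 ≤ ‖sw w - bR x θ‖ ∧ (1 + |w|) / 6 ≤ ‖sw w - bR x θ‖ := by
  have h1 : 1 ≤ ‖sw w - bR x θ‖ := by
    refine le_trans ?_ (Complex.re_le_norm _)
    simp; linarith
  have h2 := Complex.abs_im_le_norm (sw w - bR x θ)
  simp at h2
  have h3 : |w| - |θ| ≤ |-w - θ| := by
    have := abs_sub_abs_le_abs_sub (-w) θ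
    rwa [abs_neg] at this
  have := Real.pi_lt_four
  exact ⟨h1, by linarith⟩

lemma Hf_bound {A : ℝ} (hA : 0 < A) : ∃ K : ℝ, 0 < K ∧ ∀ (w x θ τ : ℝ), x ≤ 1 → |θ| ≤ π →
    ‖Hf A (sw w) (bR x θ) (bR 1 τ)‖ ≤ K * (1 + |w|) ^ (-(3 / 2) : ℝ) := by
  have hpi := Real.pi_pos
  refine ⟨(24 * π ^ 2) ^ (1 / 2 : ℝ) * Real.exp (4 * π ^ 2 * A) * (48 * π ^ 2), by positivity, ?_⟩
  intro w x θ τ hx hθ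
  obtain ⟨h1, h2⟩ := norm_sub_bR_ge (w := w) hx hθ
  have h3 := one_le_norm_bR τ
  set L := sw w - bR x θ with hL
  have hre : 0 < L.re := by simp [hL]; linarith
  have hw : 0 < 1 + |w| := by positivity
  have nP : ‖4 * (π : ℂ) ^ 2‖ = 4 * π ^ 2 := by
    rw [norm_mul, norm_pow, Complex.norm_real, Real.norm_of_nonneg hpi.le, Complex.norm_ofNat]
  have b1 : ‖Complex.exp (-(A * sw w))‖ ≤ 1 := by
    rw [Complex.norm_exp, Real.exp_le_one_iff]; simp; linarith
  have b2 : ‖(4 * (π : ℂ) ^ 2 / (L * bR 1 τ)) ^ ((1 : ℂ) / 2)‖ ≤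
      (24 * π ^ 2) ^ (1 / 2 : ℝ) * (1 + |w|) ^ (-(1 / 2) : ℝ) := by
    rw [norm_half_cpow, Real.rpow_neg hw.le, ← Real.inv_rpow hw.le,
      ← Real.mul_rpow (by positivity) (by positivity)]
    apply Real.rpow_le_rpow (norm_nonneg _) _ (by norm_num)
    rw [norm_div, nP, norm_mul, ← div_eq_mul_inv, div_le_div_iff₀ (by positivity) hw]
    have : (1 + |w|) / 6 ≤ ‖L‖ * ‖bR 1 τ‖ := h2.trans (le_mul_of_one_le_right (by positivity) h3)
    nlinarith [sq_nonneg π]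
  have n4 : ‖4 * (π : ℂ) ^ 2 / L‖ ≤ 24 * π ^ 2 * (1 + |w|)⁻¹ := by
    rw [norm_div, nP, ← div_eq_mul_inv, div_le_div_iff₀ (by positivity) hw]
    nlinarith [sq_nonneg π]
  have n5 : ‖4 * (π : ℂ) ^ 2 / L‖ ≤ 4 * π ^ 2 := by
    rw [norm_div, nP]; exact div_le_self (by positivity) h1
  have b3 : ‖Complex.exp ((A : ℂ) * (4 * (π : ℂ) ^ 2 / L))‖ ≤ Real.exp (4 * π ^ 2 * A) := by
    rw [Complex.norm_exp, Complex.re_ofReal_mul]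
    apply Real.exp_le_exp.mpr
    have := (Complex.re_le_norm (4 * (π : ℂ) ^ 2 / L)).trans n5
    nlinarith
  have b4 : ‖1 - Complex.exp (-(4 * (π : ℂ) ^ 2 / L))‖ ≤ 48 * π ^ 2 * (1 + |w|)⁻¹ :=
    (norm_one_sub_exp_le' (dual_re_pos hre).le).trans (by linarith)
  unfold Hf
  rw [← hL, norm_mul, norm_mul, norm_mul]
  have e : (1 + |w|) ^ (-(3 / 2) : ℝ) = (1 + |w|) ^ (-(1 / 2) : ℝ) * (1 + |w|)⁻¹ := by
    rw [← Real.rpow_neg_one, ← Real.rpow_add hw]; norm_num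
  rw [e]
  calc _ ≤ 1 * (((24 * π ^ 2) ^ (1 / 2 : ℝ) * (1 + |w|) ^ (-(1 / 2) : ℝ)) *
        (Real.exp (4 * π ^ 2 * A) * (48 * π ^ 2 * (1 + |w|)⁻¹))) := by
        gcongr
    _ = _ := by ring

lemma Gf_bound {A : ℝ} (hA : 0 < A) : ∃ K : ℝ, 0 < K ∧ ∀ (w r t : ℝ), 1 ≤ r → aA A ≤ r ^ 2 →
    |t| ≤ π * r ^ 3 / aA A →
    ‖Gf A (sw w) r t‖ ≤ K * (1 + |w|) ^ (-(3 / 2) : ℝ) * (1 + t ^ 2)⁻¹ := by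
  obtain ⟨K1, hK1, h1⟩ := Hf_bound hA
  obtain ⟨K2, hK2, h2⟩ := dom_exp (aA_pos hA)
  have ha := aA_pos hA
  refine ⟨K1 * K2 * 2, by positivity, fun w r t hr hr2 ht => ?_⟩
  have hr0 : 0 < r := by linarith
  unfold Gf
  have e1 : ‖Complex.exp (-(aA A * t ^ 2 / bR 1 (t / r)))‖ =
      Real.exp (-(aA A * t ^ 2 / (1 + (t / r) ^ 2))) := by
    rw [Complex.norm_exp]
    congr 1
    have : (aA A * t ^ 2 / bR 1 (t / r) : ℂ) = ((aA A * t ^ 2 : ℝ) : ℂ) * (bR 1 (t / r))⁻¹ := by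
      push_cast; rw [div_eq_mul_inv]
    rw [Complex.neg_re, this, Complex.re_ofReal_mul, Complex.inv_re, Complex.normSq_apply, bR_re, bR_im]
    ring
  have hx1 : aA A / r ^ 2 ≤ 1 := by rw [div_le_one (by positivity)]; exact hr2
  have hθ : |aA A * t / r ^ 3| ≤ π := by
    rw [abs_div, abs_mul, abs_of_pos ha, abs_of_pos (show 0 < r ^ 3 by positivity),
      div_le_iff₀ (by positivity)]
    rw [le_div_iff₀ ha] at ht; linarith
  have e3 : ‖1 - Complex.exp (-(4 * (π : ℂ) ^ 2 / bR (aA A / r ^ 2) (aA A * t / r ^ 3)))‖ ≤ 2 :=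
    norm_one_sub_exp_le (dual_re_pos (by rw [bR_re]; positivity)).le
  rw [norm_mul, norm_mul, e1]
  calc _ ≤ (K2 * (1 + t ^ 2)⁻¹) * ((K1 * (1 + |w|) ^ (-(3 / 2) : ℝ)) * 2) := by
        gcongr
        · exact h2 r t hr ht
        · exact h1 _ _ _ _ hx1 hθ
    _ = _ := by ring

lemma tendsto_bR_one (t : ℝ) : Tendsto (fun r : ℝ => bR 1 (t / r)) atTop (𝓝 1) := by
  have h : Tendsto (fun r : ℝ => t / r) atTop (𝓝 0) := tendsto_const_nhds.div_atTop tendsto_id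
  have h2 := ((continuous_bR 1).tendsto 0).comp h
  simpa [bR, Function.comp_def] using h2

lemma tendsto_bR_zero (a t : ℝ) :
    Tendsto (fun r : ℝ => bR (a / r ^ 2) (a * t / r ^ 3)) atTop (𝓝 0) := by
  have h1 : Tendsto (fun r : ℝ => a / r ^ 2) atTop (𝓝 0) :=
    tendsto_const_nhds.div_atTop (tendsto_pow_atTop (by norm_num))
  have h2 : Tendsto (fun r : ℝ => a * t / r ^ 3) atTop (𝓝 0) :=
    tendsto_const_nhds.div_atTop (tendsto_pow_atTop (by norm_num))
  have h3 := ((Complex.continuous_ofReal.tendsto 0).comp h1).add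
    (((Complex.continuous_ofReal.tendsto 0).comp h2).mul_const Complex.I)
  simpa [bR, Function.comp_def] using h3

lemma tendsto_exp_dual {a : ℝ} (ha : 0 < a) (t : ℝ) :
    Tendsto (fun r : ℝ => Complex.exp (-(4 * (π : ℂ) ^ 2 / bR (a / r ^ 2) (a * t / r ^ 3)))) atTop (𝓝 0) := by
  rw [tendsto_zero_iff_norm_tendsto_zero]
  simp_rw [Complex.norm_exp, Complex.neg_re]
  refine Real.tendsto_exp_neg_atTop_nhds_zero.comp ?_
  have h : Tendsto (fun r : ℝ => t / r) atTop (𝓝 0) := tendsto_const_nhds.div_atTop tendsto_id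
  have h1 : Tendsto (fun r : ℝ => 4 * π ^ 2 / a * (1 + (t / r) ^ 2)⁻¹) atTop (𝓝 (4 * π ^ 2 / a)) := by
    have := ((h.pow 2).const_add 1).inv₀ (by norm_num)
    simpa using this.const_mul (4 * π ^ 2 / a)
  have hpi := Real.pi_pos
  have h2 := (tendsto_pow_atTop (α := ℝ) (n := 2) (by norm_num)).atTop_mul_pos
    (by positivity : 0 < 4 * π ^ 2 / a) h1
  refine h2.congr' ?_
  filter_upwards [eventually_gt_atTop 0] with r hr
  rw [dual_re, ← Complex.normSq_eq_norm_sq, Complex.normSq_apply, bR_re, bR_im]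
  have : 0 < r ^ 2 + t ^ 2 := by positivity
  field_simp

lemma tendsto_Gf {A : ℝ} (hA : 0 < A) (w t : ℝ) :
    Tendsto (fun r : ℝ => Gf A (sw w) r t) atTop
      (𝓝 (Complex.exp (-(aA A * t ^ 2)) * Hf A (sw w) 0 1)) := by
  have ha := aA_pos hA
  have hsw : sw w ≠ 0 := by intro h; have := congrArg Complex.re h; simp at this
  have h1 := tendsto_bR_one t
  have h0 := tendsto_bR_zero (aA A) t
  have hH : ContinuousAt (fun p : ℂ × ℂ => Hf A (sw w) p.1 p.2) (0, 1) := by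
    unfold Hf
    have c1 : ContinuousAt (fun p : ℂ × ℂ => 4 * (π : ℂ) ^ 2 / ((sw w - p.1) * p.2)) (0, 1) := by
      apply ContinuousAt.div (by fun_prop) (by fun_prop)
      simpa using hsw
    have c2 : ContinuousAt (fun p : ℂ × ℂ => 4 * (π : ℂ) ^ 2 / (sw w - p.1)) (0, 1) := by
      apply ContinuousAt.div (by fun_prop) (by fun_prop)
      simpa using hsw
    have c3 : ContinuousAt (fun p : ℂ × ℂ => (4 * (π : ℂ) ^ 2 / ((sw w - p.1) * p.2)) ^ ((1 : ℂ) / 2))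
        (0, 1) := by
      refine ContinuousAt.cpow c1 continuousAt_const ?_
      left
      have := dual_re_pos (β := sw w) (by simp)
      simpa using this
    fun_prop
  have h2 := hH.tendsto.comp (h0.prodMk_nhds h1)
  have h3 : Tendsto (fun r : ℝ => Complex.exp (-(aA A * t ^ 2 / bR 1 (t / r)))) atTop
      (𝓝 (Complex.exp (-(aA A * t ^ 2 / 1)))) :=
    (Complex.continuous_exp.tendsto _).comp ((tendsto_const_nhds.div h1 one_ne_zero).neg)
  have h4 := (tendsto_exp_dual ha t).const_sub 1
  have := h3.mul (h2.mul h4)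
  simpa [Gf, Function.comp_def] using this

def Mf (A w r : ℝ) : ℂ := ∫ t in (-(π * r ^ 3 / aA A))..(π * r ^ 3 / aA A), Gf A (sw w) r t

lemma Mf_eq {A : ℝ} (hA : 0 < A) {J : ℤ} {w r : ℝ} (hr : 0 < r) (hJ : (J : ℝ) = r ^ 4)
    (hs : aA A ≤ r ^ 2) :
    ∫ θ in (-π)..π, Pf A J (sw w) (aA A / r ^ 2) θ =
      (Real.exp (2 * aA A * r ^ 2) * (Real.sqrt (aA A) / r ^ 2) : ℝ) * Mf A w r := by
  have ha := aA_pos hA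
  have h := intervalIntegral.smul_integral_comp_mul_left (a := -(π * r ^ 3 / aA A))
    (b := π * r ^ 3 / aA A) (f := Pf A J (sw w) (aA A / r ^ 2)) (c := aA A / r ^ 3)
  have e1 : aA A / r ^ 3 * (π * r ^ 3 / aA A) = π := by field_simp
  have e2 : aA A / r ^ 3 * -(π * r ^ 3 / aA A) = -π := by rw [mul_neg, e1]
  rw [e1, e2] at h
  rw [← h]
  have hx1 : aA A / r ^ 2 ≤ 1 := by rw [div_le_one (by positivity)]; exact hs
  have e3 : ∀ t : ℝ, Pf A J (sw w) (aA A / r ^ 2) (aA A / r ^ 3 * t) =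
      (Real.exp (2 * aA A * r ^ 2) * (r / Real.sqrt (aA A)) : ℝ) * Gf A (sw w) r t := by
    intro t
    rw [← Pf_eq_Gf hA hr hJ (by simp; linarith)]
    congr 1; ring
  simp_rw [e3]
  rw [intervalIntegral.integral_const_mul, Complex.real_smul, ← mul_assoc, ← Complex.ofReal_mul]
  unfold Mf
  congr 2
  have := Real.sq_sqrt ha.le
  have hs' : 0 < Real.sqrt (aA A) := Real.sqrt_pos.mpr ha
  field_simp
  exact this.symm

lemma Mf_bound {A : ℝ} (hA : 0 < A) : ∃ K : ℝ, 0 < K ∧ ∀ (w r : ℝ), 1 ≤ r → aA A ≤ r ^ 2 →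
    ‖Mf A w r‖ ≤ K * (1 + |w|) ^ (-(3 / 2) : ℝ) := by
  obtain ⟨K, hK, h⟩ := Gf_bound hA
  have ha := aA_pos hA
  have hpi := Real.pi_pos
  refine ⟨K * π, by positivity, fun w r hr hr2 => ?_⟩
  have hr0 : 0 < r := by linarith
  unfold Mf
  rw [intervalIntegral.integral_of_le (by
    have : 0 < π * r ^ 3 / aA A := by positivity
    linarith)]
  have hi := integrable_inv_one_add_sq.const_mul (K * (1 + |w|) ^ (-(3 / 2) : ℝ))
  refine (norm_integral_le_of_norm_le hi.integrableOn ?_).trans ?_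
  · filter_upwards [ae_restrict_mem measurableSet_Ioc] with t ht
    exact h w r t hr hr2 (abs_le.mpr ⟨ht.1.le, ht.2⟩)
  · refine (setIntegral_le_integral hi (Eventually.of_forall fun t => ?_)).trans (le_of_eq ?_)
    · positivity
    · rw [integral_const_mul, integral_univ_inv_one_add_sq]; ring

lemma tendsto_Mf {A : ℝ} (hA : 0 < A) (w : ℝ) :
    Tendsto (Mf A w) atTop (𝓝 (Real.sqrt (π / aA A) * Hf A (sw w) 0 1)) := by
  obtain ⟨K, hK, h⟩ := Gf_bound hA
  have ha := aA_pos hA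
  have hpi := Real.pi_pos
  have e : ∀ᶠ r : ℝ in atTop, ∫ t : ℝ, (Set.Ioc (-(π * r ^ 3 / aA A)) (π * r ^ 3 / aA A)).indicator
      (Gf A (sw w) r) t = Mf A w r := by
    filter_upwards [eventually_gt_atTop 0] with r hr
    rw [integral_indicator measurableSet_Ioc]
    unfold Mf
    rw [intervalIntegral.integral_of_le (by
      have : 0 < π * r ^ 3 / aA A := by positivity
      linarith)]
  have hl : ∫ t : ℝ, Complex.exp (-(aA A * t ^ 2)) * Hf A (sw w) 0 1 =
      Real.sqrt (π / aA A) * Hf A (sw w) 0 1 := by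
    rw [integral_mul_const]
    congr 1
    rw [← integral_gaussian, ← integral_complex_ofReal]
    congr 1; ext t; push_cast; ring_nf
  rw [← hl]
  refine Tendsto.congr' e ?_
  refine tendsto_integral_filter_of_dominated_convergence
    (fun t => K * (1 + |w|) ^ (-(3 / 2) : ℝ) * (1 + t ^ 2)⁻¹) ?_ ?_
    (integrable_inv_one_add_sq.const_mul _) ?_
  · refine Eventually.of_forall fun r => ?_
    refine AEStronglyMeasurable.indicator ?_ measurableSet_Ioc
    have hb : ∀ c d : ℝ, Measurable fun t : ℝ => bR c (d * t) := fun c d =>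
      ((continuous_bR c).comp (continuous_const.mul continuous_id)).measurable
    have hb1 := hb 1 r⁻¹
    have hb2 := hb (aA A / r ^ 2) (aA A / r ^ 3)
    have q1 : ∀ t : ℝ, r⁻¹ * t = t / r := fun t => by ring
    have q2 : ∀ t : ℝ, aA A / r ^ 3 * t = aA A * t / r ^ 3 := fun t => by ring
    simp_rw [q1] at hb1
    simp_rw [q2] at hb2
    apply Measurable.aestronglyMeasurable
    unfold Gf Hf
    fun_prop
  · filter_upwards [eventually_ge_atTop 1, eventually_ge_atTop (aA A)] with r hr hr2
    refine Eventually.of_forall fun t => ?_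
    by_cases ht : t ∈ Set.Ioc (-(π * r ^ 3 / aA A)) (π * r ^ 3 / aA A)
    · rw [Set.indicator_of_mem ht]
      exact h w r t hr (by nlinarith) (abs_le.mpr ⟨ht.1.le, ht.2⟩)
    · rw [Set.indicator_of_notMem ht, norm_zero]; positivity
  · refine Eventually.of_forall fun t => ?_
    refine (tendsto_Gf hA w t).congr' ?_
    have : Tendsto (fun r : ℝ => π * r ^ 3 / aA A) atTop atTop :=
      ((tendsto_pow_atTop (by norm_num)).const_mul_atTop hpi).atTop_div_const ha
    filter_upwards [this.eventually_gt_atTop |t|] with r hr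
    rw [Set.indicator_of_mem]
    have := abs_lt.mp hr
    exact ⟨this.1, this.2.le⟩



/-- fourth root of `n` -/
def rr (n : ℕ) : ℝ := Real.sqrt (Real.sqrt n)

lemma rr_nonneg (n : ℕ) : 0 ≤ rr n := Real.sqrt_nonneg _
lemma rr_sq (n : ℕ) : rr n ^ 2 = Real.sqrt n := Real.sq_sqrt (Real.sqrt_nonneg _)
lemma rr_four (n : ℕ) : rr n ^ 4 = n := by
  rw [show rr n ^ 4 = (rr n ^ 2) ^ 2 by ring, rr_sq, Real.sq_sqrt (Nat.cast_nonneg n)]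

lemma tendsto_rr : Tendsto rr atTop atTop :=
  Real.tendsto_sqrt_atTop.comp (Real.tendsto_sqrt_atTop.comp tendsto_natCast_atTop_atTop)

/-- the Cardy normalization -/
def cN (A : ℝ) (n : ℕ) : ℝ := Real.sqrt 2 * Real.sqrt n * Real.exp (-(2 * aA A * Real.sqrt n))

lemma cN_nonneg (A : ℝ) (n : ℕ) : 0 ≤ cN A n := by unfold cN; positivity

def ell (A : ℝ) (ν : ℤ → Measure ℝ) (n : ℕ) (w : ℝ) : ℂ := (cN A n : ℂ) * Lap ν n (sw w)

/-- normalization constant of the main term -/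
def kA (A : ℝ) : ℝ := Real.sqrt 2 * Real.sqrt (aA A) / (2 * π)

lemma kA_nonneg (A : ℝ) : 0 ≤ kA A := by unfold kA; have := Real.pi_pos; positivity

lemma ell_sub {A T : ℝ} {ν : ℤ → Measure ℝ} (hA : 0 < A) (hT : 0 < T) (hs : IsSpectrum T ν)
    (hm : ModularInvariant A ν) : ∃ C c D : ℝ, 0 < C ∧ 0 < c ∧ 0 < D ∧ ∀ (n : ℕ) (w : ℝ),
      1 ≤ rr n → aA A ≤ rr n ^ 2 →
      ‖ell A ν n w - kA A * Mf A w (rr n)‖ ≤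
        C * Real.exp (D * w ^ 2) * Real.exp (-(c * Real.sqrt n)) := by
  obtain ⟨C, κ, hC, hκ, hκ2, h⟩ := Lap_sub_main hA hT hs hm
  have ha := aA_pos hA
  have ha2 := aA_sq hA
  set a := aA A with haa
  have hpi := Real.pi_pos
  set c := (a - κ / a) / 2 with hc
  have hc0 : 0 < c := by
    have : κ / a < a := by rw [div_lt_iff₀ ha]; nlinarith
    rw [hc]; linarith
  refine ⟨Real.sqrt 2 / (2 * π) * C / a ^ 2 * (6 / c ^ 3), c, 2 * (A + 1), by positivity, hc0,
    by positivity, fun n w h1 h2 => ?_⟩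
  set r := rr n with hr
  have hr0 : 0 < r := by linarith
  have hx : 0 < a / r ^ 2 := by positivity
  have hx1 : a / r ^ 2 ≤ 1 := by rw [div_le_one (by positivity)]; exact h2
  have hJ : (((n : ℤ)) : ℝ) = r ^ 4 := by rw [hr, rr_four]; simp
  have h3 := h n (a / r ^ 2) w hx hx1
  rw [Mf_eq hA hr0 hJ h2] at h3
  have e1 : ell A ν n w - kA A * Mf A w r =
      ((cN A n / (2 * π) : ℝ) : ℂ) * (2 * π * Lap ν n (sw w) -
        (Real.exp (2 * a * r ^ 2) * (Real.sqrt a / r ^ 2) : ℝ) * Mf A w r) := by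
    unfold ell
    have : kA A = cN A n / (2 * π) * (Real.exp (2 * a * r ^ 2) * (Real.sqrt a / r ^ 2)) := by
      unfold kA cN
      rw [← haa, ← rr_sq, ← hr, Real.exp_neg]
      have := Real.exp_pos (2 * a * r ^ 2)
      field_simp
    rw [this]
    have hpi' : (π : ℂ) ≠ 0 := by exact_mod_cast hpi.ne'
    push_cast
    field_simp
  rw [e1, norm_mul, Complex.norm_real, Real.norm_of_nonneg (div_nonneg (cN_nonneg _ _) (by positivity))]
  have hcube : (r ^ 2) ^ 3 ≤ 6 / c ^ 3 * Real.exp (c * r ^ 2) := by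
    have := Real.pow_div_factorial_le_exp (c * r ^ 2) (by positivity) 3
    simp [Nat.factorial] at this
    rw [div_mul_eq_mul_div, le_div_iff₀ (by positivity)]
    rw [div_le_iff₀ (by norm_num)] at this
    nlinarith [this]
  calc _ ≤ cN A n / (2 * π) * _ := mul_le_mul_of_nonneg_left h3 (div_nonneg (cN_nonneg _ _) (by positivity))
    _ = Real.sqrt 2 / (2 * π) * C / a ^ 2 * (r ^ 2) ^ 3 * Real.exp (2 * (A + 1) * w ^ 2) *
        Real.exp (-(2 * c * r ^ 2)) := by
      unfold cN
      rw [← haa, ← rr_sq, ← hr, hJ]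
      have e2 : Real.exp (-(2 * c * r ^ 2)) = Real.exp (-(2 * a * r ^ 2)) * Real.exp (κ / (a / r ^ 2)) *
          Real.exp (a / r ^ 2 * r ^ 4) := by
        rw [← Real.exp_add, ← Real.exp_add, hc]; congr 1; field_simp; ring
      rw [e2]
      field_simp
    _ ≤ Real.sqrt 2 / (2 * π) * C / a ^ 2 * (6 / c ^ 3 * Real.exp (c * r ^ 2)) *
        Real.exp (2 * (A + 1) * w ^ 2) * Real.exp (-(2 * c * r ^ 2)) := by
      gcongr
    _ = _ := by
      rw [← rr_sq, ← hr, show -(c * r ^ 2) = c * r ^ 2 + -(2 * c * r ^ 2) by ring, Real.exp_add]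
      ring

/-- The limiting Laplace transform -/
def LcF (A w : ℝ) : ℂ := ((Real.sqrt (2 * π))⁻¹ : ℝ) * Hf A (sw w) 0 1

lemma ell_tendsto {A T : ℝ} {ν : ℤ → Measure ℝ} (hA : 0 < A) (hT : 0 < T) (hs : IsSpectrum T ν)
    (hm : ModularInvariant A ν) (w : ℝ) : Tendsto (fun n => ell A ν n w) atTop (𝓝 (LcF A w)) := by
  obtain ⟨C, c, D, hC, hc, hD, h⟩ := ell_sub hA hT hs hm
  have ha := aA_pos hA
  have hpi := Real.pi_pos
  have h1 : Tendsto (fun n : ℕ => (kA A : ℂ) * Mf A w (rr n)) atTop (𝓝 (LcF A w)) := by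
    have := ((tendsto_Mf hA w).comp tendsto_rr).const_mul (kA A : ℂ)
    have e : LcF A w = (kA A : ℂ) * (Real.sqrt (π / aA A) * Hf A (sw w) 0 1) := by
      unfold LcF
      rw [← mul_assoc, ← Complex.ofReal_mul]
      congr 2
      unfold kA
      rw [Real.sqrt_div hpi.le, Real.sqrt_mul (by norm_num)]
      have h2 := Real.sq_sqrt hpi.le
      have h3 := Real.sq_sqrt (show (0 : ℝ) ≤ 2 by norm_num)
      have h4 := Real.sqrt_pos.mpr hpi
      have h5 := Real.sqrt_pos.mpr (show (0 : ℝ) < 2 by norm_num)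
      have h6 := Real.sqrt_pos.mpr ha
      field_simp
      rw [h2, h3]
    rw [e]; exact this
  have h2 : Tendsto (fun n : ℕ => ell A ν n w - kA A * Mf A w (rr n)) atTop (𝓝 0) := by
    rw [tendsto_zero_iff_norm_tendsto_zero]
    have h3 : Tendsto (fun n : ℕ => C * Real.exp (D * w ^ 2) * Real.exp (-(c * Real.sqrt n))) atTop (𝓝 0) := by
      have := (Real.tendsto_exp_neg_atTop_nhds_zero.comp
        ((Real.tendsto_sqrt_atTop.comp tendsto_natCast_atTop_atTop).const_mul_atTop hc)).const_mul
          (C * Real.exp (D * w ^ 2))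
      simpa [Function.comp_def] using this
    refine squeeze_zero' (Eventually.of_forall fun n => norm_nonneg _) ?_ h3
    filter_upwards [tendsto_rr.eventually_ge_atTop 1, tendsto_rr.eventually_ge_atTop (aA A)] with n hn hn2
    exact h n w hn (by nlinarith)
  have := h2.add h1
  simpa using this

lemma norm_Lap_le {T : ℝ} {ν : ℤ → Measure ℝ} (J : ℤ) (w : ℝ) :
    ‖Lap ν J (sw w)‖ ≤ ‖Lap ν J (sw 0)‖ := by
  have e : Lap ν J (sw 0) = ((∫ h, Real.exp (-2 * h) ∂ν J : ℝ) : ℂ) := by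
    unfold Lap
    rw [← integral_complex_ofReal]
    congr 1; ext h; simp [sw]
  have e2 : ‖Lap ν J (sw 0)‖ = ∫ h, Real.exp (-2 * h) ∂ν J := by
    rw [e, Complex.norm_real, Real.norm_of_nonneg (integral_nonneg fun h => (Real.exp_pos _).le)]
  rw [e2]
  unfold Lap
  refine (norm_integral_le_integral_norm _).trans (le_of_eq ?_)
  congr 1; ext h
  rw [Complex.norm_exp]; simp

lemma norm_ell_le {A : ℝ} {ν : ℤ → Measure ℝ} (n : ℕ) (w : ℝ) :
    ‖ell A ν n w‖ ≤ ‖ell A ν n 0‖ := by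
  unfold ell
  rw [norm_mul, norm_mul]
  exact mul_le_mul_of_nonneg_left (norm_Lap_le (T := 0) _ _) (norm_nonneg _)

lemma ell_bound {A T : ℝ} {ν : ℤ → Measure ℝ} (hA : 0 < A) (hT : 0 < T) (hs : IsSpectrum T ν)
    (hm : ModularInvariant A ν) : ∃ C c D : ℝ, 0 < C ∧ 0 < c ∧ 0 < D ∧ ∀ᶠ n : ℕ in atTop, ∀ w : ℝ,
      ‖ell A ν n w‖ ≤ C * (1 + |w|) ^ (-(3 / 2) : ℝ) +
        C * Real.exp (D * w ^ 2) * Real.exp (-(c * Real.sqrt n)) ∧ ‖ell A ν n w‖ ≤ C := by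
  obtain ⟨C, c, D, hC, hc, hD, h⟩ := ell_sub hA hT hs hm
  obtain ⟨K, hK, hM⟩ := Mf_bound hA
  have h0 := (ell_tendsto hA hT hs hm 0).norm.eventually_le_const (lt_add_one ‖LcF A 0‖)
  have hk := kA_nonneg A
  refine ⟨C + kA A * K + (‖LcF A 0‖ + 1), c, D, by positivity, hc, hD, ?_⟩
  filter_upwards [tendsto_rr.eventually_ge_atTop 1, tendsto_rr.eventually_ge_atTop (aA A), h0]
    with n hn hn2 hn0 w
  have hr2 : aA A ≤ rr n ^ 2 := by nlinarith
  have h1 := h n w hn hr2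
  have h2 := hM w (rr n) hn hr2
  have hl := norm_nonneg (LcF A 0)
  constructor
  · have h3 : ‖ell A ν n w‖ ≤ ‖ell A ν n w - kA A * Mf A w (rr n)‖ + ‖(kA A : ℂ) * Mf A w (rr n)‖ := by
      have := norm_add_le (ell A ν n w - kA A * Mf A w (rr n)) (kA A * Mf A w (rr n))
      simpa using this
    rw [norm_mul, Complex.norm_real, Real.norm_of_nonneg hk] at h3
    have h4 : kA A * ‖Mf A w (rr n)‖ ≤ (kA A * K) * (1 + |w|) ^ (-(3 / 2) : ℝ) := by
      rw [mul_assoc]; exact mul_le_mul_of_nonneg_left h2 hk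
    have p1 : 0 ≤ (1 + |w|) ^ (-(3 / 2) : ℝ) := by positivity
    have p2 : 0 ≤ Real.exp (D * w ^ 2) * Real.exp (-(c * Real.sqrt n)) := by positivity
    have p3 : 0 ≤ kA A * K := by positivity
    nlinarith
  · refine (norm_ell_le n w).trans ?_
    have p3 : 0 ≤ kA A * K := by positivity
    linarith

lemma LcF_bound {A : ℝ} (hA : 0 < A) : ∃ K : ℝ, 0 < K ∧ ∀ w : ℝ,
    ‖LcF A w‖ ≤ K * (1 + |w|) ^ (-(3 / 2) : ℝ) := by
  obtain ⟨K, hK, h⟩ := Hf_bound hA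
  have hpi := Real.pi_pos
  refine ⟨(Real.sqrt (2 * π))⁻¹ * K, by positivity, fun w => ?_⟩
  have := h w 0 0 0 (by norm_num) (by simp [hpi.le])
  unfold LcF
  rw [norm_mul, Complex.norm_real, Real.norm_of_nonneg (by positivity), mul_assoc]
  have e : bR 0 0 = 0 := by simp [bR]
  have e' : bR 1 0 = 1 := by simp [bR]
  rw [e, e'] at this
  gcongr



lemma exp_neg_rpow_le {p η : ℝ} (hp : 0 < p) (hη : 0 < η) : ∃ K : ℝ, 0 < K ∧ ∀ x : ℝ, 0 ≤ x →
    Real.exp (-(p * x ^ η)) ≤ K * (1 + x) ^ (-(3 / 2) : ℝ) := by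
  obtain ⟨m, hm⟩ := exists_nat_ge ((3 / 2) / η)
  rw [div_le_iff₀ hη] at hm
  refine ⟨2 ^ (3 / 2 : ℝ) * (1 + m.factorial / p ^ m), by positivity, fun x hx => ?_⟩
  have hx1 : 0 < 1 + x := by linarith
  rw [Real.rpow_neg hx1.le, Real.exp_neg, ← div_eq_mul_inv, le_div_iff₀ (by positivity),
    ← div_eq_inv_mul, div_le_iff₀ (Real.exp_pos _)]
  have hE : 1 ≤ Real.exp (p * x ^ η) := Real.one_le_exp (by positivity)
  have hf : 0 ≤ (m.factorial : ℝ) / p ^ m := by positivity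
  have h2 : (0 : ℝ) < 2 ^ (3 / 2 : ℝ) := by positivity
  rcases le_total x 1 with h | h
  · calc (1 + x) ^ (3 / 2 : ℝ) ≤ 2 ^ (3 / 2 : ℝ) * (1 + 0) * 1 := by
          rw [add_zero, mul_one, mul_one]
          exact Real.rpow_le_rpow hx1.le (by linarith) (by norm_num)
      _ ≤ _ := by gcongr
  · have h3 := Real.pow_div_factorial_le_exp (p * x ^ η) (by positivity) m
    rw [mul_pow, ← Real.rpow_natCast, ← Real.rpow_natCast (x ^ η), ← Real.rpow_mul hx] at h3
    have h4 : x ^ (3 / 2 : ℝ) ≤ x ^ (η * m) := Real.rpow_le_rpow_of_exponent_le h (by linarith)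
    have h5 : x ^ (η * m) ≤ m.factorial / p ^ m * Real.exp (p * x ^ η) := by
      rw [Real.rpow_natCast, div_le_iff₀ (by positivity)] at h3
      rw [div_mul_eq_mul_div, le_div_iff₀ (by positivity)]
      linarith
    calc (1 + x) ^ (3 / 2 : ℝ) ≤ (2 * x) ^ (3 / 2 : ℝ) :=
          Real.rpow_le_rpow hx1.le (by linarith) (by norm_num)
      _ = 2 ^ (3 / 2 : ℝ) * x ^ (3 / 2 : ℝ) := Real.mul_rpow (by norm_num) hx
      _ ≤ 2 ^ (3 / 2 : ℝ) * (m.factorial / p ^ m * Real.exp (p * x ^ η)) := by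
          gcongr; exact h4.trans h5
      _ ≤ _ := by nlinarith [Real.exp_pos (p * x ^ η)]

/-- the Gaussian window factor -/
def gw (γ ξ : ℝ) (n : ℕ) (w : ℝ) : ℝ := Real.exp (-((w * (n : ℝ) ^ (-γ) - ξ) ^ 2 / 2))

lemma gw_dom {A T : ℝ} {ν : ℤ → Measure ℝ} (hA : 0 < A) (hT : 0 < T) (hs : IsSpectrum T ν)
    (hm : ModularInvariant A ν) {γ : ℝ} (hγ : 0 ≤ γ) (hγ' : γ < 1 / 4) (ξ : ℝ) :
    ∃ K : ℝ, ∀ᶠ n : ℕ in atTop, ∀ w : ℝ,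
      gw γ ξ n w * ‖ell A ν n w‖ ≤ K * (1 + |w|) ^ (-(3 / 2) : ℝ) := by
  obtain ⟨C, c, D, hC, hc, hD, h⟩ := ell_bound hA hT hs hm
  set q := c / (2 * D) with hq
  have hq0 : 0 < q := by positivity
  obtain ⟨K1, hK1, h1⟩ := exp_neg_rpow_le hD (show (0 : ℝ) < 2 by norm_num)
  obtain ⟨K2, hK2, h2⟩ := exp_neg_rpow_le (show 0 < q ^ (4 * γ) / 4 by positivity)
    (show 0 < 2 - 8 * γ by linarith)
  refine ⟨C + C * K1 + C * (Real.exp (ξ ^ 2 / 2) * K2), ?_⟩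
  filter_upwards [h, eventually_gt_atTop 0] with n hn hn0 w
  obtain ⟨ha, hb⟩ := hn w
  have hg0 : 0 ≤ gw γ ξ n w := (Real.exp_pos _).le
  have hg1 : gw γ ξ n w ≤ 1 := by
    unfold gw; rw [Real.exp_le_one_iff]; have := sq_nonneg (w * (n : ℝ) ^ (-γ) - ξ); linarith
  have hR : 0 ≤ (1 + |w|) ^ (-(3 / 2) : ℝ) := by positivity
  have hw2 : |w| ^ (2 : ℝ) = w ^ 2 := by rw [Real.rpow_two, sq_abs]
  rcases le_total (w ^ 2) (q * Real.sqrt n) with hw | hw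
  · have e1 : Real.exp (D * w ^ 2) * Real.exp (-(c * Real.sqrt n)) ≤ Real.exp (-(D * w ^ 2)) := by
      rw [← Real.exp_add]
      apply Real.exp_le_exp.mpr
      have : D * (q * Real.sqrt n) = c * Real.sqrt n / 2 := by rw [hq]; field_simp
      nlinarith
    have e2 := h1 |w| (abs_nonneg w)
    rw [hw2] at e2
    have e3 : ‖ell A ν n w‖ ≤ (C + C * K1) * (1 + |w|) ^ (-(3 / 2) : ℝ) := by
      have := mul_le_mul_of_nonneg_left (e1.trans e2) hC.le
      nlinarith
    calc gw γ ξ n w * ‖ell A ν n w‖ ≤ 1 * ‖ell A ν n w‖ := by gcongr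
      _ ≤ (C + C * K1) * (1 + |w|) ^ (-(3 / 2) : ℝ) := by rw [one_mul]; exact e3
      _ ≤ _ := by
        have : 0 ≤ C * (Real.exp (ξ ^ 2 / 2) * K2) := by positivity
        nlinarith
  · have hn1 : (0 : ℝ) < n := by exact_mod_cast hn0
    have hw0 : 0 < |w| := by
      rw [abs_pos]; rintro rfl
      have : 0 < q * Real.sqrt n := by positivity
      simp at hw; linarith
    have e1 : (n : ℝ) ≤ |w| ^ (4 : ℝ) / q ^ (2 : ℝ) := by
      have : Real.sqrt n ≤ w ^ 2 / q := by rw [le_div_iff₀ hq0]; linarith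
      have h3 := pow_le_pow_left₀ (Real.sqrt_nonneg _) this 2
      rw [Real.sq_sqrt hn1.le, div_pow] at h3
      have e4 : |w| ^ (4 : ℝ) = (w ^ 2) ^ 2 := by
        rw [show (4 : ℝ) = ((4 : ℕ) : ℝ) by norm_num, Real.rpow_natCast, ← sq_abs w]; ring
      rw [e4, Real.rpow_two]; exact h3
    have e2 : q ^ (2 * γ) * |w| ^ (-(4 * γ)) ≤ (n : ℝ) ^ (-γ) := by
      have := Real.rpow_le_rpow_of_nonpos hn1 e1 (show -γ ≤ 0 by linarith)
      refine le_trans (le_of_eq ?_) this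
      clear_value q
      rw [Real.div_rpow (by positivity) (by positivity), ← Real.rpow_mul hw0.le, ← Real.rpow_mul hq0.le,
        div_eq_mul_inv, ← Real.rpow_neg hq0.le]
      rw [mul_comm]; congr 2 <;> ring
    have e3 : q ^ (4 * γ) * |w| ^ (2 - 8 * γ) ≤ (w * (n : ℝ) ^ (-γ)) ^ 2 := by
      have h3 := pow_le_pow_left₀ (by positivity) (mul_le_mul_of_nonneg_left e2 hw0.le) 2
      have e5 : (|w| * (n : ℝ) ^ (-γ)) ^ 2 = (w * (n : ℝ) ^ (-γ)) ^ 2 := by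
        rw [mul_pow, mul_pow, sq_abs]
      rw [e5] at h3
      refine le_trans (le_of_eq ?_) h3
      have e6 : q ^ (4 * γ) = (q ^ (2 * γ)) ^ 2 := by
        rw [← Real.rpow_natCast, ← Real.rpow_mul hq0.le]; congr 1; push_cast; ring
      have e7 : |w| ^ (2 - 8 * γ) = (|w| * |w| ^ (-(4 * γ))) ^ 2 := by
        rw [← Real.rpow_one_add' hw0.le (by linarith), ← Real.rpow_natCast, ← Real.rpow_mul hw0.le]
        congr 1; push_cast; ring
      rw [e6, e7]; ring
    have e4 : gw γ ξ n w ≤ Real.exp (ξ ^ 2 / 2) * Real.exp (-(q ^ (4 * γ) / 4 * |w| ^ (2 - 8 * γ))) := by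
      unfold gw
      rw [← Real.exp_add]
      apply Real.exp_le_exp.mpr
      nlinarith [sq_nonneg (w * (n : ℝ) ^ (-γ) - 2 * ξ)]
    have e5 := h2 |w| (abs_nonneg w)
    calc gw γ ξ n w * ‖ell A ν n w‖ ≤ (Real.exp (ξ ^ 2 / 2) * (K2 * (1 + |w|) ^ (-(3 / 2) : ℝ))) * C := by
          have := mul_le_mul_of_nonneg_left e5 (Real.exp_pos (ξ ^ 2 / 2)).le
          exact mul_le_mul (e4.trans this) hb (norm_nonneg _) (by positivity)
      _ ≤ _ := by
        have : 0 ≤ C + C * K1 := by positivity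
        nlinarith

lemma integrable_dom (K : ℝ) : Integrable fun w : ℝ => K * (1 + |w|) ^ (-(3 / 2) : ℝ) := by
  have := integrable_one_add_norm (E := ℝ) (μ := volume) (r := 3 / 2) (by simp; norm_num)
  exact (by simpa using this : Integrable fun w : ℝ => (1 + |w|) ^ (-(3 / 2) : ℝ)).const_mul K

lemma continuous_sw : Continuous sw := by unfold sw; fun_prop

lemma measurable_Lap {T : ℝ} {ν : ℤ → Measure ℝ} (hT : 0 < T) (hs : IsSpectrum T ν) (J : ℤ) :
    Continuous fun w : ℝ => Lap ν J (sw w) := by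
  unfold Lap
  refine continuous_of_dominated (bound := fun h => Real.exp (-2 * h)) ?_ ?_ ?_ ?_
  · intro w
    exact (by fun_prop : Continuous fun h : ℝ => Complex.exp (-sw w * (h : ℂ))).aestronglyMeasurable
  · intro w
    refine Eventually.of_forall fun h => ?_
    rw [Complex.norm_exp]; simp
  · have := spec_integrable hs (b := 1) (b' := 1) one_pos one_pos J
    have h2 := this.mul_const (Real.exp J)
    refine h2.congr (Eventually.of_forall fun h => ?_)
    simp only
    rw [← Real.exp_add]; congr 1; ring
  · refine Eventually.of_forall fun h => ?_
    have := continuous_sw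
    fun_prop

lemma sw_re_pos' (w : ℝ) : 0 < (sw w).re := by simp

lemma sw_ne (w : ℝ) : sw w ≠ 0 := by
  intro h; have := sw_re_pos' w; rw [h] at this; simp at this

lemma continuous_LcF (A : ℝ) : Continuous (LcF A) := by
  unfold LcF Hf
  have h1 := continuous_sw
  have h2 : Continuous fun w => 4 * (π : ℂ) ^ 2 / (sw w) := continuous_const.div h1 sw_ne
  have h3 : Continuous fun w => (4 * (π : ℂ) ^ 2 / (sw w)) ^ ((1 : ℂ) / 2) := by
    rw [continuous_iff_continuousAt]
    intro w
    refine ContinuousAt.cpow h2.continuousAt continuousAt_const ?_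
    left; exact dual_re_pos (sw_re_pos' w)
  simp only [sub_zero, mul_one]
  fun_prop

/-- limit of the window integrals -/
lemma tendsto_window {A T : ℝ} {ν : ℤ → Measure ℝ} (hA : 0 < A) (hT : 0 < T) (hs : IsSpectrum T ν)
    (hm : ModularInvariant A ν) {γ : ℝ} (hγ : 0 ≤ γ) (hγ' : γ < 1 / 4) (ξ y : ℝ) :
    Tendsto (fun n : ℕ => ∫ w : ℝ, (gw γ ξ n w : ℂ) * Complex.exp (-(w * y * Complex.I)) * ell A ν n w)
      atTop (𝓝 (∫ w : ℝ, (Real.exp (-(((if γ = 0 then w else 0) - ξ) ^ 2 / 2)) : ℂ) *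
        Complex.exp (-(w * y * Complex.I)) * LcF A w)) := by
  obtain ⟨K, hK⟩ := gw_dom hA hT hs hm hγ hγ' ξ
  refine tendsto_integral_filter_of_dominated_convergence
    (fun w => K * (1 + |w|) ^ (-(3 / 2) : ℝ)) ?_ ?_ (integrable_dom K) ?_
  · refine Eventually.of_forall fun n => ?_
    have h1 := measurable_Lap hT hs n
    apply Continuous.aestronglyMeasurable
    unfold gw ell
    fun_prop
  · filter_upwards [hK] with n hn
    refine Eventually.of_forall fun w => ?_
    rw [norm_mul, norm_mul, Complex.norm_real, Real.norm_of_nonneg (show 0 ≤ gw γ ξ n w from (Real.exp_pos _).le),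
      Complex.norm_exp]
    have : (-((w : ℂ) * y * Complex.I)).re = 0 := by simp
    rw [this, Real.exp_zero, mul_one]
    exact hn w
  · refine Eventually.of_forall fun w => ?_
    refine Tendsto.mul (Tendsto.mul_const _ ?_) (ell_tendsto hA hT hs hm w)
    refine (Complex.continuous_ofReal.tendsto _).comp ?_
    unfold gw
    refine (Real.continuous_exp.tendsto _).comp ?_
    refine Tendsto.neg (Tendsto.div_const (Tendsto.pow (Tendsto.sub_const ?_ ξ) 2) 2)
    split_ifs with h0
    · simp [h0]
    · have := (tendsto_rpow_neg_atTop (lt_of_le_of_ne hγ (Ne.symm h0))).comp tendsto_natCast_atTop_atTop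
      simpa using this.const_mul w



lemma cosh_gauss {s : ℂ} (hs : 0 < s.re) (b : ℂ) :
    Integrable (fun y : ℝ => Complex.exp (-s * (y : ℂ) ^ 2) * Complex.cosh (b * y)) ∧
    ∫ y : ℝ, Complex.exp (-s * (y : ℂ) ^ 2) * Complex.cosh (b * y) =
      (π / s) ^ ((1 : ℂ) / 2) * Complex.exp (b ^ 2 / (4 * s)) := by
  have hs' : (-s).re < 0 := by simpa using hs
  have hs0 : s ≠ 0 := by rintro rfl; simp at hs
  have e : (fun y : ℝ => Complex.exp (-s * (y : ℂ) ^ 2) * Complex.cosh (b * y)) =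
      fun y : ℝ => (1 / 2 : ℂ) * (Complex.exp (-s * (y : ℂ) ^ 2 + b * y + 0) +
        Complex.exp (-s * (y : ℂ) ^ 2 + (-b) * y + 0)) := by
    ext y
    rw [Complex.cosh]
    simp only [add_zero, Complex.exp_add, neg_mul b]
    ring
  have i1 := integrable_cexp_quadratic' hs' b 0
  have i2 := integrable_cexp_quadratic' hs' (-b) 0
  refine ⟨by rw [e]; exact (i1.add i2).const_mul _, ?_⟩
  rw [e, integral_const_mul, integral_add i1 i2, integral_cexp_quadratic hs', integral_cexp_quadratic hs',
    neg_neg, neg_sq]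
  have : (0 : ℂ) - b ^ 2 / (4 * -s) = b ^ 2 / (4 * s) := by field_simp; ring
  rw [this]; ring

/-- complex second exponent -/
def bA (A : ℝ) : ℂ := if 1 ≤ A then ((4 * π * Real.sqrt (A - 1) : ℝ) : ℂ)
  else ((4 * π * Real.sqrt (1 - A) : ℝ) : ℂ) * Complex.I

lemma bA_sq (A : ℝ) : bA A ^ 2 = 16 * (π : ℂ) ^ 2 * (A - 1) := by
  unfold bA
  split_ifs with h
  · rw [← Complex.ofReal_pow, mul_pow, Real.sq_sqrt (by linarith)]; push_cast; ring
  · rw [mul_pow, Complex.I_sq, ← Complex.ofReal_pow, mul_pow, Real.sq_sqrt (by linarith)]; push_cast; ring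

/-- difference of hyperbolic functions -/
def Df (A y : ℝ) : ℝ := Real.cosh (4 * π * Real.sqrt A * y) -
  (if 1 ≤ A then Real.cosh (4 * π * Real.sqrt (A - 1) * y)
    else Real.cos (4 * π * Real.sqrt (1 - A) * y))

lemma Df_complex (A y : ℝ) : (Df A y : ℂ) =
    Complex.cosh (((4 * π * Real.sqrt A : ℝ) : ℂ) * y) - Complex.cosh (bA A * y) := by
  unfold Df bA
  split_ifs with h
  · push_cast; ring_nf
  · rw [mul_right_comm _ Complex.I, Complex.cosh_mul_I]; push_cast; ring_nf

lemma Df_deriv (A : ℝ) : HasDerivAt (Df A) 0 0 := by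
  unfold Df
  have h1 : HasDerivAt (fun y : ℝ => Real.cosh (4 * π * Real.sqrt A * y)) 0 0 := by
    have := ((hasDerivAt_id (0 : ℝ)).const_mul (4 * π * Real.sqrt A)).cosh
    simpa using this
  split_ifs with h
  · have h2 := ((hasDerivAt_id (0 : ℝ)).const_mul (4 * π * Real.sqrt (A - 1))).cosh
    simpa using h1.fun_sub h2
  · have h2 := ((hasDerivAt_id (0 : ℝ)).const_mul (4 * π * Real.sqrt (1 - A))).cos
    simpa using h1.fun_sub h2

lemma Df_zero (A : ℝ) : Df A 0 = 0 := by unfold Df; split_ifs <;> simp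

lemma continuous_Df (A : ℝ) : Continuous (Df A) := by
  unfold Df
  split_ifs <;> fun_prop

lemma Df_nonneg {A : ℝ} (hA : 0 < A) (y : ℝ) : 0 ≤ Df A y := by
  unfold Df
  split_ifs with h
  · have hpi := Real.pi_pos
    have hs : Real.sqrt (A - 1) ≤ Real.sqrt A := Real.sqrt_le_sqrt (by linarith)
    rw [sub_nonneg, Real.cosh_le_cosh, abs_mul _ y, abs_mul _ y,
      abs_of_nonneg (show 0 ≤ 4 * π * Real.sqrt (A - 1) by positivity),
      abs_of_nonneg (show 0 ≤ 4 * π * Real.sqrt A by positivity)]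
    gcongr
  · have := Real.one_le_cosh (4 * π * Real.sqrt A * y)
    have := Real.cos_le_one (4 * π * Real.sqrt (1 - A) * y)
    linarith

lemma Df_even (A y : ℝ) : Df A (-y) = Df A y := by
  unfold Df; simp

def Ef (A y : ℝ) : ℝ := Real.sqrt 2 * (Df A y / y)

lemma continuous_Ef (A : ℝ) : Continuous (Ef A) := by
  unfold Ef
  refine continuous_const.mul ?_
  rw [continuous_iff_continuousAt]
  intro y
  rcases eq_or_ne y 0 with rfl | hy
  · have h := hasDerivAt_iff_tendsto_slope.mp (Df_deriv A)
    rw [← continuousWithinAt_compl_self]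
    unfold ContinuousWithinAt
    have e : slope (Df A) 0 = fun y => Df A y / y := by
      ext y; rw [slope_def_field, Df_zero]; simp
    rw [e] at h
    simpa using h
  · exact (continuous_Df A).continuousAt.div continuousAt_id hy

lemma rhoc_eq {A : ℝ} (hA : 0 < A) (h : ℝ) : rhoc A h = Ef A (Real.sqrt (h - A)) := by
  unfold rhoc Ef Df
  split_ifs with h1 h2 h2
  · rw [Real.sqrt_eq_zero_of_nonpos (show h - A ≤ 0 by linarith)]; simp
  · rw [Real.sqrt_eq_zero_of_nonpos (show h - A ≤ 0 by linarith)]; simp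
  · rw [Real.sqrt_div (by norm_num), Real.sqrt_mul hA.le, Real.sqrt_mul (by linarith)]
    ring_nf
  · rw [Real.sqrt_div (by norm_num), Real.sqrt_mul hA.le, Real.sqrt_mul (by linarith)]
    ring_nf

lemma continuous_rhoc {A : ℝ} (hA : 0 < A) : Continuous (rhoc A) := by
  rw [show rhoc A = fun h => Ef A (Real.sqrt (h - A)) from funext (rhoc_eq hA)]
  have := continuous_Ef A
  fun_prop

lemma rhoc_nonneg {A : ℝ} (hA : 0 < A) (h : ℝ) : 0 ≤ rhoc A h := by
  rw [rhoc_eq hA]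
  unfold Ef
  have := Df_nonneg hA (Real.sqrt (h - A))
  positivity

lemma rhoc_zero {A h : ℝ} (hh : h ≤ A) : rhoc A h = 0 := by unfold rhoc; rw [if_pos hh]

lemma Df_gauss {A : ℝ} (hA : 0 < A) {s : ℂ} (hs : 0 < s.re) :
    Integrable (fun y : ℝ => Complex.exp (-s * (y : ℂ) ^ 2) * (Df A y : ℂ)) ∧
    ∫ y : ℝ, Complex.exp (-s * (y : ℂ) ^ 2) * (Df A y : ℂ) =
      (π / s) ^ ((1 : ℂ) / 2) * (Complex.exp (A * (4 * (π : ℂ) ^ 2 / s)) *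
        (1 - Complex.exp (-(4 * (π : ℂ) ^ 2 / s)))) := by
  obtain ⟨i1, e1⟩ := cosh_gauss hs ((4 * π * Real.sqrt A : ℝ) : ℂ)
  obtain ⟨i2, e2⟩ := cosh_gauss hs (bA A)
  have hs0 : s ≠ 0 := by rintro rfl; simp at hs
  simp_rw [Df_complex, mul_sub]
  refine ⟨i1.sub i2, ?_⟩
  rw [integral_sub i1 i2, e1, e2, bA_sq]
  have : ((4 * π * Real.sqrt A : ℝ) : ℂ) ^ 2 = 16 * (π : ℂ) ^ 2 * A := by
    rw [← Complex.ofReal_pow, mul_pow, Real.sq_sqrt hA.le]; push_cast; ring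
  rw [this, mul_one, ← Complex.exp_add]
  congr 3
  · field_simp; ring
  · field_simp; ring

lemma image_sq (A : ℝ) : (fun y : ℝ => A + y ^ 2) '' Set.Ioi 0 = Set.Ioi A := by
  ext h
  simp only [Set.mem_image, Set.mem_Ioi]
  constructor
  · rintro ⟨y, hy, rfl⟩; have := pow_pos hy 2; linarith
  · intro hh
    exact ⟨Real.sqrt (h - A), Real.sqrt_pos.mpr (by linarith), by rw [Real.sq_sqrt (by linarith)]; ring⟩

lemma rhoc_laplace {A : ℝ} (hA : 0 < A) (w : ℝ) :
    Integrable (fun h : ℝ => Complex.exp (-sw w * h) * (rhoc A h : ℂ)) ∧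
    ∫ h : ℝ, Complex.exp (-sw w * h) * (rhoc A h : ℂ) = LcF A w := by
  obtain ⟨i, e⟩ := Df_gauss hA (sw_re_pos' w)
  set s := sw w with hs
  have hd : ∀ x ∈ Set.Ioi (0 : ℝ), HasDerivWithinAt (fun y : ℝ => A + y ^ 2) (2 * x) (Set.Ioi 0) x := by
    intro x _
    have := ((hasDerivAt_id x).pow 2).const_add A
    simpa using this.hasDerivWithinAt
  have hinj : Set.InjOn (fun y : ℝ => A + y ^ 2) (Set.Ioi 0) := by
    intro x hx y hy hxy
    simp only [add_right_inj] at hxy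
    exact (pow_left_inj₀ (le_of_lt hx) (le_of_lt hy) (by norm_num)).mp hxy
  set g : ℝ → ℂ := fun h : ℝ => Complex.exp (-s * h) * (rhoc A h : ℂ) with hg
  set k : ℂ := 2 * Real.sqrt 2 * Complex.exp (-(A * s)) with hk
  have hcv : ∀ x ∈ Set.Ioi (0 : ℝ), |2 * x| • g (A + x ^ 2) =
      k * (Complex.exp (-s * (x : ℂ) ^ 2) * (Df A x : ℂ)) := by
    intro x hx
    have hx : 0 < x := hx
    have hxc : (x : ℂ) ≠ 0 := by exact_mod_cast hx.ne'
    rw [hg, hk, abs_of_pos (by positivity), Complex.real_smul]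
    simp only
    rw [rhoc_eq hA, add_sub_cancel_left, Real.sqrt_sq hx.le, Ef]
    have : Complex.exp (-s * ((A + x ^ 2 : ℝ) : ℂ)) = Complex.exp (-(A * s)) * Complex.exp (-s * (x : ℂ) ^ 2) := by
      rw [← Complex.exp_add]; congr 1; push_cast; ring
    rw [this]
    push_cast
    field_simp
  have iI : IntegrableOn g (Set.Ioi A) := by
    rw [← image_sq A, integrableOn_image_iff_integrableOn_abs_deriv_smul measurableSet_Ioi hd hinj]
    exact (integrableOn_congr_fun hcv measurableSet_Ioi).mpr (i.integrableOn.const_mul k)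
  have hz : ∀ h, h ∉ Set.Ioi A → g h = 0 := by
    intro h hh
    rw [hg]; simp only
    rw [rhoc_zero (by simpa using hh)]; simp
  refine ⟨?_, ?_⟩
  · exact (integrableOn_iff_integrable_of_support_subset (fun h hh => by
      by_contra hc; exact hh (hz h hc))).mp iI
  · rw [← setIntegral_eq_integral_of_forall_compl_eq_zero hz, ← image_sq A,
      integral_image_eq_integral_abs_deriv_smul measurableSet_Ioi hd hinj,
      setIntegral_congr_fun measurableSet_Ioi hcv, integral_const_mul]
    set F : ℝ → ℂ := fun y : ℝ => Complex.exp (-s * (y : ℂ) ^ 2) * (Df A y : ℂ) with hF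
    have hev : ∀ y, F (-y) = F y := by
      intro y; simp only [hF, Df_even]; congr 2; push_cast; ring
    have h1 := integral_comp_neg_Ioi 0 F
    simp_rw [hev, neg_zero] at h1
    have h2 := intervalIntegral.integral_Iic_add_Ioi (b := (0 : ℝ)) (f := F) i.integrableOn i.integrableOn
    rw [← h1, e] at h2
    have hpi := Real.pi_pos
    have h4 : (4 * (π : ℂ) ^ 2 / s) ^ ((1 : ℂ) / 2) = (Real.sqrt (4 * π) : ℂ) * (π / s) ^ ((1 : ℂ) / 2) := by
      rw [← real_mul_half_cpow (by positivity)]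
      · congr 1; push_cast; ring
      · exact div_ne_zero (by exact_mod_cast hpi.ne') (sw_ne w)
    have h5 : (Real.sqrt (2 * π))⁻¹ * Real.sqrt (4 * π) = Real.sqrt 2 := by
      rw [show (4 : ℝ) * π = 2 * (2 * π) by ring, Real.sqrt_mul (by norm_num) (2 * π)]
      have : 0 < Real.sqrt (2 * π) := by positivity
      field_simp
    have h6 : LcF A w = k / 2 * ((π / s) ^ ((1 : ℂ) / 2) * (Complex.exp (A * (4 * (π : ℂ) ^ 2 / s)) *
        (1 - Complex.exp (-(4 * (π : ℂ) ^ 2 / s))))) := by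
      unfold LcF Hf
      rw [sub_zero, mul_one, ← hs, h4, hk, ← h5]
      push_cast
      ring
    rw [h6]
    linear_combination (k / 2) * h2



lemma levy_finite {μ : ℕ → FiniteMeasure ℝ} {μ₀ : FiniteMeasure ℝ}
    (h : ∀ t, Tendsto (fun n => charFun (μ n : Measure ℝ) t) atTop (𝓝 (charFun (μ₀ : Measure ℝ) t))) :
    Tendsto μ atTop (𝓝 μ₀) := by
  have hz : ∀ η : FiniteMeasure ℝ, charFun (η : Measure ℝ) 0 = ((η.mass : ℝ) : ℂ) := by
    intro η; rw [charFun_zero]; rfl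
  have hmass : Tendsto (fun n => (μ n).mass) atTop (𝓝 μ₀.mass) := by
    have h0 := h 0
    simp_rw [hz] at h0
    have h1 := (Complex.continuous_re.tendsto _).comp h0
    simpa [Function.comp_def] using h1
  by_cases h0 : μ₀ = 0
  · rw [h0] at hmass ⊢
    exact FiniteMeasure.tendsto_zero_of_tendsto_zero_mass (by simpa using hmass)
  · refine (FiniteMeasure.tendsto_normalize_iff_tendsto h0).mp ⟨?_, hmass⟩
    rw [ProbabilityMeasure.tendsto_iff_tendsto_charFun]
    intro t
    have hm0 : μ₀.mass ≠ 0 := (FiniteMeasure.mass_nonzero_iff _).mpr h0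
    have hne : ∀ᶠ n in atTop, (μ n).mass ≠ 0 := hmass.eventually_ne hm0
    have key : ∀ η : FiniteMeasure ℝ, η.mass ≠ 0 →
        charFun (η.normalize : Measure ℝ) t = ((η.mass : ℝ) : ℂ)⁻¹ * charFun (η : Measure ℝ) t := by
      intro η hη
      rw [FiniteMeasure.toMeasure_normalize_eq_of_nonzero _ ((FiniteMeasure.mass_nonzero_iff _).mp hη),
        charFun_apply, charFun_apply, integral_smul_nnreal_measure, NNReal.smul_def, Complex.real_smul]
      push_cast; rfl
    rw [key _ hm0]
    have h2 : Tendsto (fun n => (((μ n).mass : ℝ) : ℂ)⁻¹ * charFun (μ n : Measure ℝ) t) atTop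
        (𝓝 (((μ₀.mass : ℝ) : ℂ)⁻¹ * charFun (μ₀ : Measure ℝ) t)) := by
      refine Tendsto.mul (Tendsto.inv₀ ?_ (by exact_mod_cast hm0)) (h t)
      exact (Complex.continuous_ofReal.tendsto _).comp ((NNReal.continuous_coe.tendsto _).comp hmass)
    refine h2.congr' ?_
    filter_upwards [hne] with n hn
    rw [key _ hn]

lemma finite_portmanteau {η : ℕ → FiniteMeasure ℝ} {η₀ : FiniteMeasure ℝ} (h : Tendsto η atTop (𝓝 η₀))
    {E : Set ℝ} (hE : (η₀ : Measure ℝ) (frontier E) = 0) :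
    Tendsto (fun n => (η n) E) atTop (𝓝 (η₀ E)) := by
  by_cases h0 : η₀ = 0
  · have hm := h.mass
    rw [h0] at hm ⊢
    refine tendsto_of_tendsto_of_tendsto_of_le_of_le tendsto_const_nhds (by simpa using hm) ?_ ?_
    · intro n; simp
    · intro n; exact FiniteMeasure.apply_le_mass _ _
  · have h1 := FiniteMeasure.tendsto_normalize_of_tendsto h h0
    have hE' : η₀.normalize (frontier E) = 0 := by
      rw [FiniteMeasure.normalize_eq_of_nonzero _ h0]
      have : η₀ (frontier E) = 0 := by
        rw [FiniteMeasure.null_iff_toMeasure_null]; exact hE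
      rw [this, mul_zero]
    have h2 := ProbabilityMeasure.tendsto_measure_of_null_frontier_of_tendsto h1 hE'
    have h3 := h.mass.mul h2
    simpa only [← FiniteMeasure.self_eq_mass_mul_normalize] using h3

def mkF (η : Measure ℝ) (h : IsFiniteMeasure η) : FiniteMeasure ℝ := ⟨η, h⟩

lemma mkF_coe (η : Measure ℝ) (h : IsFiniteMeasure η) : (mkF η h : Measure ℝ) = η := rfl

lemma window_tendsto {μ : ℕ → Measure ℝ} {μ₀ : Measure ℝ} [∀ n, IsFiniteMeasure (μ n)] [IsFiniteMeasure μ₀]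
    (h : ∀ t, Tendsto (fun n => charFun (μ n) t) atTop (𝓝 (charFun μ₀ t)))
    {φ : ℝ → ℝ} (hφ : Continuous φ) (hφ0 : ∀ y, 0 ≤ φ y) {C : ℝ} (hC : ∀ y, φ y ≤ C)
    {E : Set ℝ} (hEm : MeasurableSet E) (hE : μ₀ (frontier E) = 0) :
    Tendsto (fun n => ∫ y in E, φ y ∂μ n) atTop (𝓝 (∫ y in E, φ y ∂μ₀)) := by
  set d : ℝ → NNReal := fun y => Real.toNNReal (φ y) with hd
  have hdm : Measurable d := (continuous_real_toNNReal.comp hφ).measurable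
  have hC0 : 0 ≤ C := (hφ0 0).trans (hC 0)
  have fin : ∀ η : Measure ℝ, IsFiniteMeasure η → IsFiniteMeasure (η.withDensity fun y => (d y : ENNReal)) := by
    intro η hη
    refine isFiniteMeasure_withDensity ?_
    refine ne_of_lt (lt_of_le_of_lt (lintegral_mono (g := fun _ => (Real.toNNReal C : ENNReal)) ?_) ?_)
    · intro y
      simp only [hd]
      exact_mod_cast Real.toNNReal_le_toNNReal (hC y)
    · rw [lintegral_const]; exact ENNReal.mul_lt_top ENNReal.coe_lt_top (measure_lt_top _ _)
  have hl : Tendsto (fun n => mkF (μ n) inferInstance) atTop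
      (𝓝 (mkF μ₀ inferInstance)) := levy_finite h
  have hl2 : Tendsto (fun n => mkF ((μ n).withDensity fun y => (d y : ENNReal)) (fin _ inferInstance))
      atTop (𝓝 (mkF (μ₀.withDensity fun y => (d y : ENNReal)) (fin _ inferInstance))) := by
    rw [FiniteMeasure.tendsto_iff_forall_integral_tendsto] at hl ⊢
    intro f
    have e : ∀ η : Measure ℝ, ∫ x, f x ∂(η.withDensity fun y => (d y : ENNReal)) = ∫ x, φ x * f x ∂η := by
      intro η
      rw [integral_withDensity_eq_integral_smul hdm]
      congr 1; ext x
      rw [NNReal.smul_def, smul_eq_mul, hd]; simp only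
      rw [Real.coe_toNNReal _ (hφ0 x)]
    have := hl (BoundedContinuousFunction.ofNormedAddCommGroup (fun x => φ x * f x)
      (hφ.mul f.continuous) (C * ‖f‖) (by
        intro x
        rw [norm_mul, Real.norm_of_nonneg (hφ0 x)]
        exact mul_le_mul (hC x) (f.norm_coe_le_norm x) (norm_nonneg _) hC0))
    simp only [mkF_coe, e]
    exact this
  have h3 := finite_portmanteau hl2 (E := E) (withDensity_absolutelyContinuous _ _ hE)
  have h4 := (NNReal.continuous_coe.tendsto _).comp h3
  have e2 : ∀ (η : Measure ℝ) (hη : IsFiniteMeasure (η.withDensity fun y => (d y : ENNReal))),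
      ((mkF (η.withDensity fun y => (d y : ENNReal)) hη E : NNReal) : ℝ) = ∫ y in E, φ y ∂η := by
    intro η hη
    have : ((mkF (η.withDensity fun y => (d y : ENNReal)) hη E : NNReal) : ℝ) =
      ((η.withDensity fun y => (d y : ENNReal)) E).toReal := rfl
    rw [this, withDensity_apply _ hEm, integral_eq_lintegral_of_nonneg_ae (Eventually.of_forall hφ0)
      hφ.aestronglyMeasurable]
    rfl
  simpa only [Function.comp_def, e2] using h4



lemma gauss_int {g : ℝ} (hg : 0 < g) (ξ : ℝ) :
    Integrable fun w : ℝ => Real.exp (-((w * g⁻¹ - ξ) ^ 2 / 2)) := by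
  have h1 : Integrable fun x : ℝ => Real.exp (-(1 / 2 : ℝ) * x ^ 2) := integrable_exp_neg_mul_sq (by norm_num)
  have h2 := (h1.comp_sub_right ξ).comp_mul_right' (inv_ne_zero hg.ne')
  refine h2.congr (Eventually.of_forall fun w => ?_)
  simp only; congr 1; ring

lemma gauss_id {g : ℝ} (hg : 0 < g) (ξ x : ℝ) :
    ∫ w : ℝ, (Real.exp (-((w * g⁻¹ - ξ) ^ 2 / 2)) : ℂ) * Complex.exp (w * x * Complex.I) =
      ((Real.sqrt (2 * π) * g * Real.exp (-((g * x) ^ 2 / 2)) : ℝ) : ℂ) *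
        Complex.exp (ξ * (g * x) * Complex.I) := by
  have hgc : (g : ℂ) ≠ 0 := by exact_mod_cast hg.ne'
  have hb : (-((g⁻¹ ^ 2 / 2 : ℝ) : ℂ)).re < 0 := by
    rw [Complex.neg_re, Complex.ofReal_re]; have : 0 < g⁻¹ ^ 2 / 2 := by positivity
    linarith
  have h := integral_cexp_quadratic hb ((g⁻¹ * ξ : ℝ) + x * Complex.I) ((-(ξ ^ 2 / 2) : ℝ) : ℂ)
  have e1 : (fun w : ℝ => (Real.exp (-((w * g⁻¹ - ξ) ^ 2 / 2)) : ℂ) * Complex.exp (w * x * Complex.I)) =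
      fun w : ℝ => Complex.exp (-((g⁻¹ ^ 2 / 2 : ℝ) : ℂ) * (w : ℂ) ^ 2 +
        ((g⁻¹ * ξ : ℝ) + x * Complex.I) * w + ((-(ξ ^ 2 / 2) : ℝ) : ℂ)) := by
    ext w
    rw [Complex.ofReal_exp, ← Complex.exp_add]
    congr 1; push_cast; ring
  rw [e1, h, neg_neg]
  have e2 : ((π : ℂ) / ((g⁻¹ ^ 2 / 2 : ℝ) : ℂ)) ^ ((1 : ℂ) / 2) = ((Real.sqrt (2 * π) * g : ℝ) : ℂ) := by
    have hpi := Real.pi_pos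
    rw [← Complex.ofReal_div, show (1 : ℂ) / 2 = ((1 / 2 : ℝ) : ℂ) by push_cast; rfl,
      ← Complex.ofReal_cpow (by positivity), ← Real.sqrt_eq_rpow]
    congr 1
    rw [show π / (g⁻¹ ^ 2 / 2) = 2 * π * g ^ 2 by field_simp, Real.sqrt_mul (by positivity),
      Real.sqrt_sq hg.le]
  rw [e2, Complex.ofReal_mul (_ * _), mul_assoc]
  congr 1
  rw [Complex.ofReal_exp, ← Complex.exp_add]
  congr 1
  push_cast
  field_simp
  ring_nf
  rw [Complex.I_sq]
  ring

/-- weight -/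
def wt (c g hs h : ℝ) : ℝ := c * g * Real.exp (-((g * (h - hs)) ^ 2 / 2))

lemma wt_nonneg {c g hs h : ℝ} (hc : 0 ≤ c) (hg : 0 < g) : 0 ≤ wt c g hs h := by unfold wt; positivity

lemma wt_le {c g hs h : ℝ} (hc : 0 ≤ c) (hg : 0 < g) : wt c g hs h ≤ c * g := by
  unfold wt
  refine mul_le_of_le_one_right (by positivity) ?_
  rw [Real.exp_le_one_iff]; have := sq_nonneg (g * (h - hs)); linarith

/-- rescaled measure -/
def kap (ρ : Measure ℝ) (c g hs : ℝ) : Measure ℝ :=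
  (ρ.withDensity fun h => (Real.toNNReal (wt c g hs h) : ENNReal)).map fun h => g * (h - hs)

lemma emb {g : ℝ} (hg : 0 < g) (hs : ℝ) : MeasurableEmbedding fun h : ℝ => g * (h - hs) :=
  ((Homeomorph.subRight hs).trans (Homeomorph.mulLeft₀ g hg.ne')).measurableEmbedding

lemma measurable_wt (c g hs : ℝ) : Measurable fun h => Real.toNNReal (wt c g hs h) := by
  unfold wt; fun_prop

lemma kap_integral {E : Type*} [NormedAddCommGroup E] [NormedSpace ℝ E] (ρ : Measure ℝ) {c g : ℝ} (hs : ℝ)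
    (hc : 0 ≤ c) (hg : 0 < g) (F : ℝ → E) :
    ∫ y, F y ∂(kap ρ c g hs) = ∫ h, wt c g hs h • F (g * (h - hs)) ∂ρ := by
  unfold kap
  rw [(emb hg hs).integral_map, integral_withDensity_eq_integral_smul (measurable_wt c g hs)]
  congr 1; ext h
  rw [NNReal.smul_def, Real.coe_toNNReal _ (wt_nonneg hc hg)]

lemma kap_setIntegral {E : Type*} [NormedAddCommGroup E] [NormedSpace ℝ E] (ρ : Measure ℝ) {c g : ℝ} (hs : ℝ)
    (hc : 0 ≤ c) (hg : 0 < g) (F : ℝ → E) {S : Set ℝ} (hS : MeasurableSet S) :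
    ∫ y in S, F y ∂(kap ρ c g hs) =
      ∫ h in (fun h => g * (h - hs)) ⁻¹' S, wt c g hs h • F (g * (h - hs)) ∂ρ := by
  unfold kap
  rw [(emb hg hs).setIntegral_map, setIntegral_withDensity_eq_setIntegral_smul (measurable_wt c g hs)
    _ ((emb hg hs).measurable hS)]
  congr 1; ext h
  rw [NNReal.smul_def, Real.coe_toNNReal _ (wt_nonneg hc hg)]

lemma kap_finite (ρ : Measure ℝ) [IsFiniteMeasure ρ] {c g : ℝ} (hs : ℝ)
    (hc : 0 ≤ c) (hg : 0 < g) : IsFiniteMeasure (kap ρ c g hs) := by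
  have : IsFiniteMeasure (ρ.withDensity fun h => (Real.toNNReal (wt c g hs h) : ENNReal)) := by
    refine isFiniteMeasure_withDensity ?_
    refine ne_of_lt (lt_of_le_of_lt (lintegral_mono (g := fun _ => (Real.toNNReal (c * g) : ENNReal)) ?_) ?_)
    · intro y
      exact ENNReal.coe_le_coe.mpr (Real.toNNReal_le_toNNReal (wt_le hc hg))
    · rw [lintegral_const]; exact ENNReal.mul_lt_top ENNReal.coe_lt_top (measure_lt_top _ _)
  unfold kap
  infer_instance

lemma charFun_kap (ρ : Measure ℝ) [IsFiniteMeasure ρ] {c g : ℝ} (hs : ℝ)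
    (hc : 0 ≤ c) (hg : 0 < g) (ξ : ℝ) :
    charFun (kap ρ c g hs) ξ = (((Real.sqrt (2 * π))⁻¹ : ℝ) : ℂ) *
      ∫ w : ℝ, (Real.exp (-((w * g⁻¹ - ξ) ^ 2 / 2)) : ℂ) * Complex.exp (-(w * hs * Complex.I)) *
        (c * charFun ρ w) := by
  have hpi := Real.pi_pos
  have hsq : 0 < Real.sqrt (2 * π) := by positivity
  rw [charFun_apply_real, kap_integral ρ hs hc hg]
  have e1 : ∀ h : ℝ, wt c g hs h • Complex.exp (ξ * ((g * (h - hs) : ℝ) : ℂ) * Complex.I) =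
      (((Real.sqrt (2 * π))⁻¹ * c : ℝ) : ℂ) *
        ∫ w : ℝ, (Real.exp (-((w * g⁻¹ - ξ) ^ 2 / 2)) : ℂ) * Complex.exp (w * ((h - hs : ℝ) : ℂ) * Complex.I) := by
    intro h
    have hw : wt c g hs h = ((Real.sqrt (2 * π))⁻¹ * c) *
        (Real.sqrt (2 * π) * g * Real.exp (-((g * (h - hs)) ^ 2 / 2))) := by
      unfold wt; field_simp
    rw [gauss_id hg, Complex.real_smul, hw, Complex.ofReal_mul (_ * c), mul_assoc]
    congr 3
    push_cast; ring
  simp_rw [e1]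
  rw [integral_const_mul, integral_integral_swap]
  · rw [Complex.ofReal_mul, mul_assoc, ← integral_const_mul]
    congr 2; ext w
    rw [charFun_apply_real, integral_const_mul]
    have : ∀ h : ℝ, Complex.exp (w * ((h - hs : ℝ) : ℂ) * Complex.I) =
        Complex.exp (-(w * hs * Complex.I)) * Complex.exp (w * h * Complex.I) := by
      intro h; rw [← Complex.exp_add]; congr 1; push_cast; ring
    simp_rw [this]
    rw [integral_const_mul]; ring
  · have i1 : Integrable (fun p : ℝ × ℝ => (1 : ℝ) * Real.exp (-((p.2 * g⁻¹ - ξ) ^ 2 / 2))) (ρ.prod volume) :=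
      (integrable_const (1 : ℝ)).mul_prod (gauss_int hg ξ)
    refine i1.mono' ?_ (Eventually.of_forall fun p => ?_)
    · apply Continuous.aestronglyMeasurable
      unfold Function.uncurry
      fun_prop
    · simp only [Function.uncurry]
      rw [norm_mul, Complex.norm_real, Complex.norm_exp, Real.norm_of_nonneg (Real.exp_pos _).le]
      have : ((p.2 : ℂ) * ((p.1 - hs : ℝ) : ℂ) * Complex.I).re = 0 := by
        rw [← Complex.ofReal_mul]; simp
      rw [this]; simp

lemma kap_window (ρ : Measure ℝ) {c g : ℝ} (hs : ℝ)
    (hc : 0 ≤ c) (hg : 0 < g) {δ : ℝ} :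
    ∫ y in Set.Ioo (-δ) δ, Real.exp (y ^ 2 / 2) * Real.exp (2 * (hs + y / g)) ∂(kap ρ c g hs) =
      c * g * ∫ h in Set.Ioo (hs - δ * g⁻¹) (hs + δ * g⁻¹), Real.exp (2 * h) ∂ρ := by
  rw [kap_setIntegral ρ hs hc hg _ measurableSet_Ioo, ← integral_const_mul]
  have hS : (fun h => g * (h - hs)) ⁻¹' Set.Ioo (-δ) δ = Set.Ioo (hs - δ * g⁻¹) (hs + δ * g⁻¹) := by
    ext h
    simp only [Set.mem_preimage, Set.mem_Ioo, ← div_eq_mul_inv]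
    constructor
    · rintro ⟨h1, h2⟩
      have h3 : h - hs < δ / g := by rw [lt_div_iff₀ hg]; linarith
      have h4 : -(h - hs) < δ / g := by rw [lt_div_iff₀ hg]; linarith
      constructor <;> linarith
    · rintro ⟨h1, h2⟩
      have h3 : h - hs < δ / g := by linarith
      have h4 : -(h - hs) < δ / g := by linarith
      rw [lt_div_iff₀ hg] at h3 h4
      constructor <;> linarith
  rw [hS]
  congr 1; ext h
  unfold wt
  rw [smul_eq_mul, mul_div_cancel_left₀ _ hg.ne', add_sub_cancel, Real.exp_neg]
  have := Real.exp_pos ((g * (h - hs)) ^ 2 / 2)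
  field_simp



/-- tilted measure -/
def tl (μ : Measure ℝ) (f : ℝ → ℝ) : Measure ℝ := μ.withDensity fun h => (Real.toNNReal (f h) : ENNReal)

lemma tl_integral {E : Type*} [NormedAddCommGroup E] [NormedSpace ℝ E] (μ : Measure ℝ) {f : ℝ → ℝ}
    (hf : Continuous f) (hf0 : ∀ h, 0 ≤ f h) (F : ℝ → E) :
    ∫ y, F y ∂(tl μ f) = ∫ h, f h • F h ∂μ := by
  unfold tl
  rw [integral_withDensity_eq_integral_smul (f := fun h => Real.toNNReal (f h)) (continuous_real_toNNReal.comp hf).measurable]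
  congr 1; ext h
  rw [NNReal.smul_def, Real.coe_toNNReal _ (hf0 h)]

lemma tl_setIntegral {E : Type*} [NormedAddCommGroup E] [NormedSpace ℝ E] (μ : Measure ℝ) {f : ℝ → ℝ}
    (hf : Continuous f) (hf0 : ∀ h, 0 ≤ f h) (F : ℝ → E) {S : Set ℝ} (hS : MeasurableSet S) :
    ∫ y in S, F y ∂(tl μ f) = ∫ h in S, f h • F h ∂μ := by
  unfold tl
  rw [setIntegral_withDensity_eq_setIntegral_smul (f := fun h => Real.toNNReal (f h))
    (continuous_real_toNNReal.comp hf).measurable _ hS]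
  congr 1; ext h
  rw [NNReal.smul_def, Real.coe_toNNReal _ (hf0 h)]

lemma tl_finite {μ : Measure ℝ} {f : ℝ → ℝ} (hf : Integrable f μ) : IsFiniteMeasure (tl μ f) := by
  unfold tl
  refine isFiniteMeasure_withDensity ?_
  exact hf.lintegral_lt_top.ne

lemma charFun_tl_nu {ν : ℤ → Measure ℝ} (J : ℤ) (w : ℝ) :
    charFun (tl (ν J) fun h => Real.exp (-2 * h)) w = Lap ν J (sw w) := by
  rw [charFun_apply_real, tl_integral _ (by fun_prop) (fun h => (Real.exp_pos _).le)]
  unfold Lap sw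
  congr 1; ext h
  rw [Complex.real_smul, Complex.ofReal_exp, ← Complex.exp_add]
  congr 1; push_cast; ring

lemma finite_tl_nu {T : ℝ} {ν : ℤ → Measure ℝ} (hs : IsSpectrum T ν) (J : ℤ) :
    IsFiniteMeasure (tl (ν J) fun h => Real.exp (-2 * h)) := by
  apply tl_finite
  have := spec_integrable hs (b := 1) (b' := 1) one_pos one_pos J
  have h2 := this.mul_const (Real.exp J)
  refine h2.congr (Eventually.of_forall fun h => ?_)
  simp only
  rw [← Real.exp_add]; congr 1; ring

lemma nu_window (μ : Measure ℝ) {S : Set ℝ} (hS : MeasurableSet S) :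
    ∫ h in S, Real.exp (2 * h) ∂(tl μ fun h => Real.exp (-2 * h)) = (μ S).toReal := by
  rw [tl_setIntegral _ (by fun_prop) (fun h => (Real.exp_pos _).le) _ hS]
  have : ∀ h : ℝ, Real.exp (-2 * h) • Real.exp (2 * h) = 1 := by
    intro h; rw [smul_eq_mul, ← Real.exp_add]; simp
  simp_rw [this]
  simp [Measure.real]

/-- limit density -/
def lden (A h : ℝ) : ℝ := Real.exp (-2 * h) * rhoc A h

lemma lden_cont {A : ℝ} (hA : 0 < A) : Continuous (lden A) := by
  have := continuous_rhoc hA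
  unfold lden; fun_prop

lemma lden_nonneg {A : ℝ} (hA : 0 < A) (h : ℝ) : 0 ≤ lden A h :=
  mul_nonneg (Real.exp_pos _).le (rhoc_nonneg hA h)

lemma lden_int {A : ℝ} (hA : 0 < A) : Integrable (lden A) := by
  have h := ((rhoc_laplace hA 0).1).norm
  refine h.congr (Eventually.of_forall fun h => ?_)
  simp only
  rw [norm_mul, Complex.norm_exp, Complex.norm_real, Real.norm_of_nonneg (rhoc_nonneg hA h)]
  unfold lden
  congr 2
  simp

lemma LcF_eq {A : ℝ} (hA : 0 < A) (w : ℝ) :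
    LcF A w = ∫ h : ℝ, Complex.exp (w * h * Complex.I) * (lden A h : ℂ) := by
  rw [← (rhoc_laplace hA w).2]
  congr 1; ext h
  unfold lden sw
  rw [Complex.ofReal_mul, Complex.ofReal_exp, ← mul_assoc, ← Complex.exp_add]
  congr 2; push_cast; ring

lemma charFun_tl_lden {A : ℝ} (hA : 0 < A) (w : ℝ) : charFun (tl volume (lden A)) w = LcF A w := by
  rw [charFun_apply_real, tl_integral _ (lden_cont hA) (lden_nonneg hA), LcF_eq hA]
  congr 1; ext h
  rw [Complex.real_smul, mul_comm]

lemma LcF_integrable {A : ℝ} (hA : 0 < A) : Integrable (LcF A) := by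
  obtain ⟨K, hK, h⟩ := LcF_bound hA
  exact (integrable_dom K).mono' (continuous_LcF A).aestronglyMeasurable (Eventually.of_forall h)

open FourierTransform in
lemma inv_LcF {A : ℝ} (hA : 0 < A) (x : ℝ) :
    ∫ w : ℝ, Complex.exp (-(w * x * Complex.I)) * LcF A w = (2 * π * lden A x : ℝ) := by
  have hpi := Real.pi_pos
  set f : ℝ → ℂ := fun h => (lden A h : ℂ) with hf
  have hfc : Continuous f := Complex.continuous_ofReal.comp (lden_cont hA)
  have hfi : Integrable f := (lden_int hA).ofReal
  have hF : ∀ v : ℝ, 𝓕 f v = LcF A (-(2 * π) * v) := by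
    intro v
    rw [Real.fourier_real_eq_integral_exp_smul, LcF_eq hA]
    congr 1; ext h
    rw [smul_eq_mul]
    congr 2; push_cast; ring
  have hFi : Integrable (𝓕 f) := by
    have : 𝓕 f = fun v => LcF A (-(2 * π) * v) := funext hF
    rw [this]
    exact (LcF_integrable hA).comp_mul_left' (by nlinarith)
  have h := congrFun (hfc.fourierInv_fourier_eq hfi hFi) x
  rw [Real.fourierInv_eq', hf] at h
  have h2 : (fun v : ℝ => Complex.exp (((2 * π * inner ℝ v x : ℝ) : ℂ) * Complex.I) • 𝓕 f v) =
      fun v : ℝ => (fun w : ℝ => Complex.exp (-(w * x * Complex.I)) * LcF A w) (-(2 * π) * v) := by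
    ext v
    rw [hF, smul_eq_mul]
    simp only
    congr 2
    simp; ring
  rw [h2, Measure.integral_comp_mul_left
    (fun w : ℝ => Complex.exp (-(w * x * Complex.I)) * LcF A w) (-(2 * π))] at h
  rw [abs_inv, abs_neg, abs_of_pos (by positivity), Complex.real_smul] at h
  simp only at h
  rw [Complex.ofReal_mul, ← h, ← mul_assoc, ← Complex.ofReal_mul, mul_inv_cancel₀ (by positivity)]
  simp



/-- the rescaled tilted measures, index shifted so that the scale is positive -/
def kseq (A : ℝ) (ν : ℤ → Measure ℝ) (γ hstar : ℝ) (n : ℕ) : Measure ℝ :=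
  kap (tl (ν ((n + 1 : ℕ) : ℤ)) fun h => Real.exp (-2 * h)) (cN A (n + 1)) (((n + 1 : ℕ) : ℝ) ^ γ) hstar

lemma gpos (γ : ℝ) (n : ℕ) : 0 < ((n + 1 : ℕ) : ℝ) ^ γ := by positivity

lemma kseq_finite {A T : ℝ} {ν : ℤ → Measure ℝ} (hs : IsSpectrum T ν) (γ hstar : ℝ) (n : ℕ) :
    IsFiniteMeasure (kseq A ν γ hstar n) := by
  have := finite_tl_nu hs ((n + 1 : ℕ) : ℤ)
  exact kap_finite _ _ (cN_nonneg A _) (gpos γ n)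

lemma kseq_charFun {A T : ℝ} {ν : ℤ → Measure ℝ} (hA : 0 < A) (hT : 0 < T) (hs : IsSpectrum T ν)
    (hm : ModularInvariant A ν) {γ : ℝ} (hγ : 0 ≤ γ) (hγ' : γ < 1 / 4) (hstar ξ : ℝ) :
    Tendsto (fun n => charFun (kseq A ν γ hstar n) ξ) atTop
      (𝓝 ((((Real.sqrt (2 * π))⁻¹ : ℝ) : ℂ) *
        ∫ w : ℝ, (Real.exp (-(((if γ = 0 then w else 0) - ξ) ^ 2 / 2)) : ℂ) *
        Complex.exp (-(w * hstar * Complex.I)) * LcF A w)) := by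
  have h := ((tendsto_add_atTop_iff_nat 1).mpr (tendsto_window hA hT hs hm hγ hγ' ξ hstar)).const_mul
    (((Real.sqrt (2 * π))⁻¹ : ℝ) : ℂ)
  refine h.congr fun n => ?_
  have := finite_tl_nu hs ((n + 1 : ℕ) : ℤ)
  unfold kseq
  rw [charFun_kap _ _ (cN_nonneg A _) (gpos γ n)]
  congr 2; ext w
  rw [charFun_tl_nu]
  unfold gw ell
  rw [Real.rpow_neg (by positivity)]

lemma kseq_window {A : ℝ} (ν : ℤ → Measure ℝ) (γ hstar δ : ℝ) (n : ℕ) :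
    ∫ y in Set.Ioo (-δ) δ, Real.exp (y ^ 2 / 2) * Real.exp (2 * (hstar + y / ((n + 1 : ℕ) : ℝ) ^ γ))
      ∂(kseq A ν γ hstar n) =
    cN A (n + 1) * ((n + 1 : ℕ) : ℝ) ^ γ *
      (ν ((n + 1 : ℕ) : ℤ) (Set.Ioo (hstar - δ * ((n + 1 : ℕ) : ℝ) ^ (-γ))
        (hstar + δ * ((n + 1 : ℕ) : ℝ) ^ (-γ)))).toReal := by
  unfold kseq
  rw [kap_window _ _ (cN_nonneg A _) (gpos γ n), nu_window _ measurableSet_Ioo, Real.rpow_neg (by positivity)]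

/-- clipping -/
def cl (δ y : ℝ) : ℝ := max (-δ) (min δ y)

lemma cl_eq {δ y : ℝ} (hy : y ∈ Set.Ioo (-δ) δ) : cl δ y = y := by
  unfold cl; rw [min_eq_right hy.2.le, max_eq_right hy.1.le]

lemma cl_cont (δ : ℝ) : Continuous (cl δ) := by unfold cl; fun_prop

lemma cl_le {δ : ℝ} (hδ : 0 < δ) (y : ℝ) : cl δ y ≤ δ := by
  unfold cl; exact max_le (by linarith) (min_le_left _ _)

lemma le_cl {δ : ℝ} (y : ℝ) : -δ ≤ cl δ y := le_max_left _ _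

lemma cl_sq {δ : ℝ} (hδ : 0 < δ) (y : ℝ) : (cl δ y) ^ 2 ≤ δ ^ 2 :=
  sq_le_sq' (le_cl y) (cl_le hδ y)

lemma window_gen {A T : ℝ} {ν : ℤ → Measure ℝ} (hs : IsSpectrum T ν) {γ : ℝ}
    (hstar a : ℝ) {δ : ℝ} (hδ : 0 < δ) (ha : 0 ≤ a) (μ₀ : Measure ℝ) [IsFiniteMeasure μ₀]
    (hμ : μ₀ ≪ volume)
    (h : ∀ t, Tendsto (fun n => charFun (kseq A ν γ hstar n) t) atTop (𝓝 (charFun μ₀ t))) :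
    Tendsto (fun n => ∫ y in Set.Ioo (-δ) δ, Real.exp (y ^ 2 / 2) * Real.exp (2 * (hstar + a * y))
      ∂(kseq A ν γ hstar n)) atTop
      (𝓝 (∫ y in Set.Ioo (-δ) δ, Real.exp (y ^ 2 / 2) * Real.exp (2 * (hstar + a * y)) ∂μ₀)) := by
  have := fun n => kseq_finite (A := A) hs γ hstar n
  have hE : μ₀ (frontier (Set.Ioo (-δ) δ)) = 0 := by
    apply hμ
    rw [frontier_Ioo (by linarith)]
    exact (Set.toFinite _).measure_zero _
  have hc := cl_cont δ
  have key := window_tendsto h (φ := fun y => Real.exp (cl δ y ^ 2 / 2) * Real.exp (2 * (hstar + a * cl δ y)))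
    (by fun_prop) (fun y => by positivity) (C := Real.exp (δ ^ 2 / 2) * Real.exp (2 * (hstar + a * δ)))
    (fun y => by
      have h1 := cl_sq hδ y
      have h2 := cl_le hδ y
      gcongr) measurableSet_Ioo hE
  have e : ∀ η : Measure ℝ, ∫ y in Set.Ioo (-δ) δ, Real.exp (cl δ y ^ 2 / 2) * Real.exp (2 * (hstar + a * cl δ y)) ∂η
      = ∫ y in Set.Ioo (-δ) δ, Real.exp (y ^ 2 / 2) * Real.exp (2 * (hstar + a * y)) ∂η := by
    intro η
    refine setIntegral_congr_fun measurableSet_Ioo fun y hy => ?_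
    simp only [cl_eq hy]
  simpa only [e] using key

lemma case_zero {A T : ℝ} {ν : ℤ → Measure ℝ} (hA : 0 < A) (hT : 0 < T) (hs : IsSpectrum T ν)
    (hm : ModularInvariant A ν) (hstar : ℝ) {δ : ℝ} (hδ : 0 < δ) :
    Tendsto (fun n : ℕ => cN A (n + 1) * ((n + 1 : ℕ) : ℝ) ^ (0 : ℝ) *
      (ν ((n + 1 : ℕ) : ℤ) (Set.Ioo (hstar - δ * ((n + 1 : ℕ) : ℝ) ^ (-(0 : ℝ)))
        (hstar + δ * ((n + 1 : ℕ) : ℝ) ^ (-(0 : ℝ))))).toReal) atTop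
      (𝓝 (∫ h in (hstar - δ)..(hstar + δ), rhoc A h)) := by
  have f0 := tl_finite (lden_int hA)
  have f1 := kap_finite (tl volume (lden A)) (c := 1) (g := 1) hstar zero_le_one one_pos
  have key := window_gen (A := A) hs (γ := 0) hstar 1 hδ zero_le_one (kap (tl volume (lden A)) 1 1 hstar) ?_ ?_
  · have e := kap_window (tl volume (lden A)) (c := 1) (g := 1) hstar zero_le_one one_pos (δ := δ)
    have e2 : ∫ y in Set.Ioo (-δ) δ, Real.exp (y ^ 2 / 2) * Real.exp (2 * (hstar + 1 * y))
        ∂(kap (tl volume (lden A)) 1 1 hstar) = ∫ h in (hstar - δ)..(hstar + δ), rhoc A h := by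
      simp only [one_mul]
      simp only [div_one, inv_one, mul_one, one_mul] at e
      rw [e, intervalIntegral.integral_of_le (by linarith), integral_Ioc_eq_integral_Ioo,
        tl_setIntegral _ (lden_cont hA) (lden_nonneg hA) _ measurableSet_Ioo]
      congr 1; ext h
      unfold lden
      rw [smul_eq_mul, mul_right_comm, ← Real.exp_add]; simp
    rw [e2] at key
    refine key.congr fun n => ?_
    rw [← kseq_window]
    congr 1; ext y
    rw [Real.rpow_zero, div_one, one_mul]
  · unfold kap
    have e := (emb one_pos hstar)
    refine Measure.AbsolutelyContinuous.trans (Measure.AbsolutelyContinuous.map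
      ((withDensity_absolutelyContinuous _ _).trans (withDensity_absolutelyContinuous _ _)) e.measurable) ?_
    have : (fun h : ℝ => 1 * (h - hstar)) = fun h => h - hstar := by ext h; ring
    rw [this, (measurePreserving_sub_right volume hstar).map_eq]
  · intro t
    have h := kseq_charFun hA hT hs hm (le_refl 0) (by norm_num) hstar t
    rw [charFun_kap _ _ zero_le_one one_pos]
    convert h using 3
    congr 1; ext w
    rw [charFun_tl_lden hA]
    simp

lemma case_pos_aux {A T : ℝ} {ν : ℤ → Measure ℝ} (hA : 0 < A) (hT : 0 < T) (hs : IsSpectrum T ν)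
    (hm : ModularInvariant A ν) (hstar : ℝ) {δ γ : ℝ} (hδ : 0 < δ) (hγ : 0 < γ) (hγ' : γ < 1 / 4) :
    Tendsto (fun n => ∫ y in Set.Ioo (-δ) δ, Real.exp (y ^ 2 / 2) * Real.exp (2 * (hstar + 0 * y))
      ∂(kseq A ν γ hstar n)) atTop (𝓝 (2 * δ * rhoc A hstar)) := by
  have hpi := Real.pi_pos
  set f : ℝ → ℝ := fun y => lden A hstar * Real.exp (-(y ^ 2 / 2)) with hf
  have hfc : Continuous f := by fun_prop
  have hf0 : ∀ y, 0 ≤ f y := fun y => mul_nonneg (lden_nonneg hA _) (Real.exp_pos _).le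
  have hfi : Integrable f := by
    have := (gauss_int one_pos 0).const_mul (lden A hstar)
    simpa using this
  have f0 := tl_finite hfi
  have key := window_gen (A := A) hs (γ := γ) hstar 0 hδ le_rfl (tl volume f)
    (withDensity_absolutelyContinuous _ _) ?_
  · convert key using 2
    rw [tl_setIntegral _ hfc hf0 _ measurableSet_Ioo]
    have : ∀ y : ℝ, f y • (Real.exp (y ^ 2 / 2) * Real.exp (2 * (hstar + 0 * y))) = rhoc A hstar := by
      intro y
      simp only [hf, lden]
      rw [smul_eq_mul, show Real.exp (-2 * hstar) * rhoc A hstar * Real.exp (-(y ^ 2 / 2)) *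
        (Real.exp (y ^ 2 / 2) * Real.exp (2 * (hstar + 0 * y))) =
        rhoc A hstar * (Real.exp (-2 * hstar) * Real.exp (2 * (hstar + 0 * y))) *
          (Real.exp (-(y ^ 2 / 2)) * Real.exp (y ^ 2 / 2)) by ring, ← Real.exp_add, ← Real.exp_add]
      simp
    simp_rw [this]
    rw [setIntegral_const, smul_eq_mul, Measure.real, Real.volume_Ioo, ENNReal.toReal_ofReal (by linarith)]
    ring
  · intro t
    have h := kseq_charFun hA hT hs hm hγ.le hγ' hstar t
    convert h using 2
    simp only [if_neg hγ.ne']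
    simp_rw [mul_assoc (Complex.ofReal (Real.exp _))]
    rw [integral_const_mul, inv_LcF hA, charFun_apply_real, tl_integral _ hfc hf0]
    have e := gauss_id one_pos 0 t
    have e1 : ∀ y : ℝ, f y • Complex.exp (t * y * Complex.I) = (lden A hstar : ℂ) *
        ((Real.exp (-((y * 1⁻¹ - 0) ^ 2 / 2)) : ℂ) * Complex.exp (y * t * Complex.I)) := by
      intro y
      rw [Complex.real_smul, hf, Complex.ofReal_mul, mul_assoc]
      congr 2
      · simp
      · ring_nf
    simp_rw [e1]
    rw [integral_const_mul, e]
    have h2 : (Real.sqrt (2 * π))⁻¹ * (2 * π) = Real.sqrt (2 * π) := by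
      have h3 : 0 < Real.sqrt (2 * π) := by positivity
      have h4 := Real.mul_self_sqrt (show 0 ≤ 2 * π by positivity)
      field_simp
      nlinarith
    simp only [Complex.ofReal_zero, zero_mul, Complex.exp_zero, mul_one, one_mul, zero_sub, neg_sq]
    rw [← Complex.ofReal_mul, ← Complex.ofReal_mul, ← Complex.ofReal_mul]
    congr 1
    nth_rw 1 [← h2]; ring

lemma case_pos {A T : ℝ} {ν : ℤ → Measure ℝ} (hA : 0 < A) (hT : 0 < T) (hs : IsSpectrum T ν)
    (hm : ModularInvariant A ν) (hstar : ℝ) {δ γ : ℝ} (hδ : 0 < δ) (hγ : 0 < γ) (hγ' : γ < 1 / 4) :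
    Tendsto (fun n : ℕ => cN A (n + 1) * ((n + 1 : ℕ) : ℝ) ^ γ *
      (ν ((n + 1 : ℕ) : ℤ) (Set.Ioo (hstar - δ * ((n + 1 : ℕ) : ℝ) ^ (-γ))
        (hstar + δ * ((n + 1 : ℕ) : ℝ) ^ (-γ)))).toReal) atTop
      (𝓝 (2 * δ * rhoc A hstar)) := by
  have aux := case_pos_aux hA hT hs hm hstar hδ hγ hγ'
  have hg : Tendsto (fun n : ℕ => 2 * δ * (((n + 1 : ℕ) : ℝ) ^ γ)⁻¹) atTop (𝓝 (2 * δ * 0)) := by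
    refine Tendsto.const_mul _ (tendsto_inv_atTop_zero.comp ?_)
    exact (tendsto_rpow_atTop hγ).comp (tendsto_natCast_atTop_atTop.comp (tendsto_add_atTop_nat 1))
  rw [mul_zero] at hg
  have hu : Tendsto (fun n : ℕ => Real.exp (2 * δ * (((n + 1 : ℕ) : ℝ) ^ γ)⁻¹)) atTop (𝓝 1) := by
    have := (Real.continuous_exp.tendsto _).comp hg
    rw [Real.exp_zero] at this; exact this
  have hl : Tendsto (fun n : ℕ => Real.exp (-(2 * δ * (((n + 1 : ℕ) : ℝ) ^ γ)⁻¹))) atTop (𝓝 1) := by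
    have := (Real.continuous_exp.tendsto _).comp hg.neg
    rw [neg_zero, Real.exp_zero] at this; exact this
  have hL := hl.mul aux
  have hU := hu.mul aux
  rw [one_mul] at hL hU
  have hfin := fun n => kseq_finite (A := A) hs γ hstar n
  have hitg : ∀ n (a : ℝ), IntegrableOn (fun y => Real.exp (y ^ 2 / 2) * Real.exp (2 * (hstar + a * y)))
      (Set.Ioo (-δ) δ) (kseq A ν γ hstar n) := by
    intro n a
    have := hfin n
    refine IntegrableOn.mono_set ?_ Set.Ioo_subset_Icc_self
    exact (by fun_prop : Continuous fun y => Real.exp (y ^ 2 / 2) * Real.exp (2 * (hstar + a * y))).continuousOn.integrableOn_compact isCompact_Icc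
  have hbd : ∀ n : ℕ, ∀ y ∈ Set.Ioo (-δ) δ, |2 * (y / ((n + 1 : ℕ) : ℝ) ^ γ)| ≤ 2 * δ * (((n + 1 : ℕ) : ℝ) ^ γ)⁻¹ := by
    intro n y hy
    have := gpos γ n
    rw [abs_mul, abs_div, abs_of_pos this, abs_two, div_eq_mul_inv, ← mul_assoc]
    have : |y| ≤ δ := abs_le.mpr ⟨hy.1.le, hy.2.le⟩
    gcongr
  have hitg2 : ∀ n : ℕ, IntegrableOn (fun y => Real.exp (y ^ 2 / 2) * Real.exp (2 * (hstar + y / ((n + 1 : ℕ) : ℝ) ^ γ)))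
      (Set.Ioo (-δ) δ) (kseq A ν γ hstar n) := by
    intro n
    have := hitg n (((n + 1 : ℕ) : ℝ) ^ γ)⁻¹
    simpa only [div_eq_inv_mul] using this
  refine tendsto_of_tendsto_of_tendsto_of_le_of_le hL hU (fun n => ?_) (fun n => ?_)
  · simp only
    rw [← kseq_window, ← integral_const_mul]
    refine setIntegral_mono_on ((hitg n 0).const_mul _) (hitg2 n) measurableSet_Ioo fun y hy => ?_
    have := (abs_le.mp (hbd n y hy)).1
    rw [mul_left_comm]
    refine mul_le_mul_of_nonneg_left ?_ (Real.exp_pos _).le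
    rw [← Real.exp_add]
    refine Real.exp_le_exp.mpr ?_
    linarith
  · simp only
    rw [← kseq_window, ← integral_const_mul]
    refine setIntegral_mono_on (hitg2 n) ((hitg n 0).const_mul _) measurableSet_Ioo fun y hy => ?_
    have := (abs_le.mp (hbd n y hy)).2
    rw [mul_left_comm]
    refine mul_le_mul_of_nonneg_left ?_ (Real.exp_pos _).le
    rw [← Real.exp_add]
    refine Real.exp_le_exp.mpr ?_
    linarith

lemma final_const {A : ℝ} (hA : 0 < A) (γ : ℝ) (n : ℕ) :
    cN A (n + 1) * ((n + 1 : ℕ) : ℝ) ^ γ =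
    Real.sqrt 2 * ((n + 1 : ℕ) : ℝ) ^ ((1 / 2 : ℝ) + γ) *
          Real.exp (-(4 * π * Real.sqrt (A * ((n + 1 : ℕ) : ℝ)))) := by
  unfold cN aA
  rw [Real.rpow_add (by positivity), ← Real.sqrt_eq_rpow, Real.sqrt_mul hA.le]
  rw [show 2 * (2 * π * √A) * √((n + 1 : ℕ) : ℝ) = 4 * π * (√A * √((n + 1 : ℕ) : ℝ)) by ring]
  ring


/-- Corollary (Cardy counting in shrinking windows): the number of spin-`J` states with
`h ∈ (h* - δJ^(-γ), h* + δJ^(-γ))` has the universal Cardy asymptotics. -/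
theorem cardy_counting
    (A Tgap : ℝ) (hA : 0 < A) (hTgap : 0 < Tgap)
    (ν : ℤ → Measure ℝ) (hspec : IsSpectrum Tgap ν) (hmod : ModularInvariant A ν)
    (δ γ hstar : ℝ) (hδ : 0 < δ) (hγ : 0 ≤ γ) (hγ' : γ < 1 / 4) (hhstar : 0 < hstar) :
    Tendsto
      (fun J : ℤ =>
        Real.sqrt 2 * (J : ℝ) ^ ((1 / 2 : ℝ) + γ) *
          Real.exp (-(4 * π * Real.sqrt (A * (J : ℝ)))) *
          ((ν J) (Set.Ioo (hstar - δ * (J : ℝ) ^ (-γ)) (hstar + δ * (J : ℝ) ^ (-γ)))).toReal)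
      atTop
      (𝓝 (if γ = 0 then ∫ h in (hstar - δ)..(hstar + δ), rhoc A h
           else 2 * δ * rhoc A hstar)) := by
  have hnat : Tendsto (fun n : ℕ => cN A (n + 1) * ((n + 1 : ℕ) : ℝ) ^ γ *
      (ν ((n + 1 : ℕ) : ℤ) (Set.Ioo (hstar - δ * ((n + 1 : ℕ) : ℝ) ^ (-γ))
        (hstar + δ * ((n + 1 : ℕ) : ℝ) ^ (-γ)))).toReal) atTop
      (𝓝 (if γ = 0 then ∫ h in (hstar - δ)..(hstar + δ), rhoc A h
           else 2 * δ * rhoc A hstar)) := by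
    split_ifs with h0
    · subst h0
      exact case_zero hA hTgap hspec hmod hstar hδ
    · exact case_pos hA hTgap hspec hmod hstar hδ (lt_of_le_of_ne hγ (Ne.symm h0)) hγ'
  rw [← Nat.map_cast_int_atTop, tendsto_map'_iff, ← tendsto_add_atTop_iff_nat 1]
  refine hnat.congr fun n => ?_
  rw [final_const hA]
  simp only [Function.comp, Int.cast_natCast]
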